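/- arXiv:1910.10480 — 11 statements merged into one kernel-verified Lean document; each statement's English description precedes it below -/
import Mathlib

section
/- Let G be a finite group, H a subgroup, and a, b, g ∈ G; set λ = HaH and μ = HbH. Then the number of pairs (x,y) ∈ λ×μ with x·y ∈ g^H equals |g^H| times the number of pairs (x,y) ∈ λ×μ with x·y = g. -/
/-! Conjugation by an element of `H` preserves every `H`-double coset. Hence, choosing for each
`x ∈ g^H` an element `c x ∈ H` with `x = c x * g * (c x)⁻¹`, simultaneous conjugation of both
coordinates by `c x` is a bijection from the pairs with product `g` onto the pairs with product `x`.
Summing over `x` amounts to a bijection between the pairs with product in `g^H` and the product of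
`g^H` with the fiber over `g`. -/

/-- A double coset `HaH` is stable under conjugation by elements of `H`. -/
lemma conj_mem_double_coset {G : Type*} [Group G] {H : Subgroup G} {a x h : G} (hh : h ∈ H)
    (hx : ∃ h₁ ∈ H, ∃ h₂ ∈ H, x = h₁ * a * h₂) :
    ∃ h₁ ∈ H, ∃ h₂ ∈ H, h * x * h⁻¹ = h₁ * a * h₂ := by
  obtain ⟨h₁, m₁, h₂, m₂, rfl⟩ := hx
  exact ⟨h * h₁, H.mul_mem hh m₁, h₂ * h⁻¹, H.mul_mem m₂ (H.inv_mem hh), by group⟩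

/-- Let `G` be a finite group, `H` a subgroup, `a b g ∈ G`, `λ = HaH`, `μ = HbH`.
The number of pairs `(x,y) ∈ λ × μ` with `x * y ∈ g^H` (the `H`-conjugacy class of `g`)
equals `|g^H|` times the number of pairs with `x * y = g`. -/
theorem fiber_card_over_conjugacy_class
    {G : Type*} [Group G] [Finite G] (H : Subgroup G) (a b g : G) :
    Nat.card {p : G × G |
        (∃ h₁ ∈ H, ∃ h₂ ∈ H, p.1 = h₁ * a * h₂) ∧
        (∃ h₁ ∈ H, ∃ h₂ ∈ H, p.2 = h₁ * b * h₂) ∧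
        (∃ h ∈ H, p.1 * p.2 = h * g * h⁻¹)} =
    Nat.card {x : G | ∃ h ∈ H, x = h * g * h⁻¹} *
      Nat.card {p : G × G |
        (∃ h₁ ∈ H, ∃ h₂ ∈ H, p.1 = h₁ * a * h₂) ∧
        (∃ h₁ ∈ H, ∃ h₂ ∈ H, p.2 = h₁ * b * h₂) ∧ p.1 * p.2 = g} := by
  have hc : ∀ x : G, ∃ h ∈ H, (∃ h ∈ H, x = h * g * h⁻¹) → x = h * g * h⁻¹ := by
    intro x
    by_cases hx : ∃ h ∈ H, x = h * g * h⁻¹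
    · obtain ⟨h, hh, e⟩ := hx
      exact ⟨h, hh, fun _ => e⟩
    · exact ⟨1, H.one_mem, fun h => absurd h hx⟩
  choose c hcH hc using hc
  -- The product of the conjugated pair is `x`, so the same `c x` undoes the conjugation.
  have key : ∀ x : G, (∃ h ∈ H, x = h * g * h⁻¹) → ∀ p : G × G, p.1 * p.2 = g →
      (c x * p.1 * (c x)⁻¹) * (c x * p.2 * (c x)⁻¹) = x := by
    intro x hx p hp
    calc _ = c x * (p.1 * p.2) * (c x)⁻¹ := by group
      _ = x := by rw [hp]; exact (hc x hx).symm
  rw [← Nat.card_prod]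
  refine Nat.card_congr
    { toFun := fun p => ⟨⟨p.1.1 * p.1.2, p.2.2.2⟩,
        ⟨((c (p.1.1 * p.1.2))⁻¹ * p.1.1 * (c (p.1.1 * p.1.2)),
          (c (p.1.1 * p.1.2))⁻¹ * p.1.2 * (c (p.1.1 * p.1.2))), ?_, ?_, ?_⟩⟩
      invFun := fun q => ⟨(c q.1.1 * q.2.1.1 * (c q.1.1)⁻¹, c q.1.1 * q.2.1.2 * (c q.1.1)⁻¹),
        conj_mem_double_coset (hcH _) q.2.2.1, conj_mem_double_coset (hcH _) q.2.2.2.1, ?_⟩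
      left_inv := ?_
      right_inv := ?_ }
  · simpa using conj_mem_double_coset (H.inv_mem (hcH (p.1.1 * p.1.2))) p.2.1
  · simpa using conj_mem_double_coset (H.inv_mem (hcH (p.1.1 * p.1.2))) p.2.2.1
  · have e := hc _ p.2.2.2
    generalize c (p.1.1 * p.1.2) = k at e ⊢
    calc _ = k⁻¹ * (p.1.1 * p.1.2) * k := by group
      _ = g := by rw [e]; group
  · have e := key q.1.1 q.1.2 q.2.1 q.2.2.2.2
    obtain ⟨h, hh, e'⟩ := q.1.2
    exact ⟨h, hh, e.trans e'⟩
  · rintro ⟨⟨x, y⟩, hp⟩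
    ext <;> simp [mul_assoc]
  · rintro ⟨⟨x, hx⟩, ⟨p, hp⟩⟩
    have e := key x hx p hp.2.2
    ext
    · exact e
    · simp only [e]; group
    · simp only [e]; group
end

section
/- Let G be a finite group, H a subgroup, and a, b, g ∈ G; set λ = HaH and μ = HbH. Then the order |H| divides the number of pairs (x,y) ∈ λ×μ with x·y = g. (Equivalently, the structure constants of the Hecke algebra of (G,H) with respect to the normalized double-coset sums are non-negative integers.) -/
/-!
A pair `(x, y)` with `x * y = g` is determined by `x`, so the pairs correspond to the set `S` of
those `x ∈ HaH` with `x⁻¹ * g ∈ HbH`. Both conditions are invariant under `x ↦ x * h` for `h ∈ H`,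
so `S` is a union of left cosets of `H`, i.e. the preimage of its image in `G ⧸ H`. Such a preimage
is in bijection with `H × (image of S)` by `QuotientGroup.preimageMkEquivSubgroupProdSet`.
-/

/-- Let `G` be a finite group, `H` a subgroup, `a b g ∈ G`, `λ = HaH`, `μ = HbH`.
Then `|H|` divides the number of pairs `(x,y) ∈ λ × μ` with `x * y = g`
(i.e. the structure constants of the Hecke algebra of `(G,H)` are non-negative integers). -/
theorem card_H_dvd_fiber_card
    {G : Type*} [Group G] [Finite G] (H : Subgroup G) (a b g : G) :
    Nat.card H ∣
      Nat.card {p : G × G |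
        (∃ h₁ ∈ H, ∃ h₂ ∈ H, p.1 = h₁ * a * h₂) ∧
        (∃ h₁ ∈ H, ∃ h₂ ∈ H, p.2 = h₁ * b * h₂) ∧ p.1 * p.2 = g} := by
  let S : Set G := {x | (∃ h₁ ∈ H, ∃ h₂ ∈ H, x = h₁ * a * h₂) ∧
    (∃ h₁ ∈ H, ∃ h₂ ∈ H, x⁻¹ * g = h₁ * b * h₂)}
  have hmul : ∀ x ∈ S, ∀ h ∈ H, x * h ∈ S := by
    rintro x ⟨⟨u, hu, v, hv, hx⟩, ⟨w, hw, z, hz, hy⟩⟩ h hh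
    refine ⟨⟨u, hu, v * h, H.mul_mem hv hh, by rw [hx]; group⟩,
      ⟨h⁻¹ * w, H.mul_mem (H.inv_mem hh) hw, z, hz, ?_⟩⟩
    rw [mul_inv_rev, mul_assoc, hy]
    group
  have hsat : (QuotientGroup.mk : G → G ⧸ H) ⁻¹' (QuotientGroup.mk '' S) = S := by
    refine Set.Subset.antisymm ?_ (Set.subset_preimage_image _ _)
    rintro y ⟨x, hx, hxy⟩
    simpa using hmul x hx _ (QuotientGroup.eq.mp hxy)
  have hcard : Nat.card S = Nat.card H * Nat.card ((QuotientGroup.mk : G → G ⧸ H) '' S) := by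
    rw [← Nat.card_prod, ← Nat.card_congr (QuotientGroup.preimageMkEquivSubgroupProdSet H _), hsat]
  refine Dvd.intro _ (hcard.symm.trans (Nat.card_congr ?_))
  exact
    { toFun := fun x => ⟨(x.1, x.1⁻¹ * g), x.2.1, x.2.2, mul_inv_cancel_left _ _⟩
      invFun := fun p => ⟨p.1.1, p.2.1, by
        rw [inv_mul_eq_of_eq_mul p.2.2.2.symm]
        exact p.2.2.1⟩
      left_inv := fun _ => rfl
      right_inv := fun p => Subtype.ext (Prod.ext rfl (inv_mul_eq_of_eq_mul p.2.2.2.symm)) }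
end

section
/- Let G be a group, H a subgroup, and g₁, g₂ ∈ G. The projection (h₁,h₂) ↦ h₁ is a bijection from the stabilizer {(h₁,h₂) ∈ H×H : h₁g₁h₂⁻¹ = g₁ and h₂g₂h₁⁻¹ = g₂} of (g₁,g₂) under the reverted action onto the intersection C_H(g₁g₂) ∩ g₁Hg₁⁻¹ = {h ∈ H : h·(g₁g₂) = (g₁g₂)·h and h ∈ g₁Hg₁⁻¹}. -/
/-!
The stabilizer equations say `h₁ g₁ = g₁ h₂` and `h₂ g₂ = g₂ h₁`. The first is equivalent to
`h₂ = g₁⁻¹ h₁ g₁`, so `h₁` determines `h₂`, and `h₂ ∈ H` means `h₁ ∈ g₁Hg₁⁻¹`. Given the first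
equation, multiplying the second on the left by `g₁` turns it into `h₁ (g₁ g₂) = (g₁ g₂) h₁`.
-/

/-- Let `G` be a group, `H` a subgroup, `g₁ g₂ ∈ G`. The projection
`(h₁,h₂) ↦ h₁` is a bijection from the stabilizer of `(g₁,g₂)` under the reverted action
of `H × H` onto the intersection `C_H(g₁g₂) ∩ g₁Hg₁⁻¹`. -/
theorem reverted_stabilizer_bijOn_centralizer_inter
    {G : Type*} [Group G] (H : Subgroup G) (g₁ g₂ : G) :
    Set.BijOn (fun p : G × G => p.1)
      {p : G × G | p.1 ∈ H ∧ p.2 ∈ H ∧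
        p.1 * g₁ * p.2⁻¹ = g₁ ∧ p.2 * g₂ * p.1⁻¹ = g₂}
      {h : G | h ∈ H ∧ h * (g₁ * g₂) = (g₁ * g₂) * h ∧
        ∃ h' ∈ H, h = g₁ * h' * g₁⁻¹} := by
  refine ⟨?_, ?_, ?_⟩
  · rintro ⟨a, b⟩ ⟨ha, hb, h1, h2⟩
    simp only [mul_inv_eq_iff_eq_mul] at h1 h2
    refine ⟨ha, ?_, b, hb, ?_⟩
    · change a * (g₁ * g₂) = g₁ * g₂ * a
      rw [← mul_assoc, h1, mul_assoc, h2, mul_assoc]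
    · exact eq_mul_inv_of_mul_eq h1
  · rintro ⟨a, b⟩ ⟨-, -, h1, -⟩ ⟨a', b'⟩ ⟨-, -, h1', -⟩ (rfl : a = a')
    simp only [mul_inv_eq_iff_eq_mul] at h1 h1'
    exact Prod.ext rfl (mul_left_cancel (h1.symm.trans h1'))
  · rintro h ⟨hh, hc, b, hb, he⟩
    have h1 : h * g₁ = g₁ * b := by rw [he, inv_mul_cancel_right]
    refine ⟨(h, b), ⟨hh, hb, mul_inv_eq_iff_eq_mul.2 h1, mul_inv_eq_iff_eq_mul.2 ?_⟩, rfl⟩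
    apply mul_left_cancel (a := g₁)
    rw [← mul_assoc, ← h1, mul_assoc, hc, mul_assoc]
end

section
/- Let G be a finite group, H a subgroup, and g₁, g₂ ∈ G. The cardinality of the orbit {(h₁g₁h₂⁻¹, h₂g₂h₁⁻¹) : h₁, h₂ ∈ H} of (g₁,g₂) under the reverted action of H×H, multiplied by the cardinality of C_H(g₁g₂) ∩ g₁Hg₁⁻¹, equals |H|². -/
/-!
This is the orbit–stabilizer theorem for the reverted action. A pair `(h₁, h₂)` fixes `(g₁, g₂)`
iff `h₂ = g₁⁻¹ h₁ g₁` and `h₁` commutes with `g₁ g₂`, so `(h₁, h₂) ↦ h₁` is a bijection from the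
stabilizer onto `C_H(g₁g₂) ∩ g₁Hg₁⁻¹`.
-/

/-- The reverted action of `H × H` on `G × G`. -/
abbrev revertedAction {G : Type*} [Group G] (H : Subgroup G) : MulAction (H × H) (G × G) where
  smul h p := (h.1 * p.1 * (h.2 : G)⁻¹, h.2 * p.2 * (h.1 : G)⁻¹)
  one_smul p := by
    change (_, _) = _
    simp
  mul_smul a b p := by
    change (_, _) = ((a.1 : G) * (b.1 * p.1 * (b.2 : G)⁻¹) * (a.2 : G)⁻¹,
      (a.2 : G) * (b.2 * p.2 * (b.1 : G)⁻¹) * (a.1 : G)⁻¹)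
    simp [mul_assoc]

theorem reverted_stabilizer_iff {G : Type*} [Group G] (g₁ g₂ a b : G) :
    (a * g₁ * b⁻¹ = g₁ ∧ b * g₂ * a⁻¹ = g₂) ↔
      (b = g₁⁻¹ * a * g₁ ∧ a * (g₁ * g₂) = (g₁ * g₂) * a) := by
  rw [mul_inv_eq_iff_eq_mul, mul_inv_eq_iff_eq_mul, mul_assoc g₁⁻¹, eq_inv_mul_iff_mul_eq,
    eq_comm (a := a * g₁)]
  refine and_congr_right fun h => ?_
  rw [← mul_assoc a, ← h, mul_assoc, mul_assoc, mul_right_inj]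

/-- Let `G` be a finite group, `H` a subgroup, `g₁ g₂ ∈ G`. The cardinality
of the orbit of `(g₁,g₂)` under the reverted action of `H × H`, multiplied by the
cardinality of `C_H(g₁g₂) ∩ g₁Hg₁⁻¹`, equals `|H|²`. -/
theorem reverted_orbit_card_mul_stabilizer_card
    {G : Type*} [Group G] [Finite G] (H : Subgroup G) (g₁ g₂ : G) :
    Nat.card {p : G × G |
        ∃ h₁ ∈ H, ∃ h₂ ∈ H, p = (h₁ * g₁ * h₂⁻¹, h₂ * g₂ * h₁⁻¹)} *
      Nat.card {h : G | h ∈ H ∧ h * (g₁ * g₂) = (g₁ * g₂) * h ∧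
        ∃ h' ∈ H, h = g₁ * h' * g₁⁻¹} =
    Nat.card H ^ 2 := by
  let _ := revertedAction H
  have horb : {p : G × G | ∃ h₁ ∈ H, ∃ h₂ ∈ H, p = (h₁ * g₁ * h₂⁻¹, h₂ * g₂ * h₁⁻¹)} =
      MulAction.orbit (H × H) (g₁, g₂) := by
    ext p
    constructor
    · rintro ⟨a, ha, b, hb, rfl⟩
      exact ⟨(⟨a, ha⟩, ⟨b, hb⟩), rfl⟩
    · rintro ⟨⟨⟨a, ha⟩, ⟨b, hb⟩⟩, rfl⟩
      exact ⟨a, ha, b, hb, rfl⟩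
  have hmem : ∀ x : H × H, x ∈ MulAction.stabilizer (H × H) (g₁, g₂) ↔
      ((x.2 : G) = g₁⁻¹ * x.1 * g₁ ∧ x.1 * (g₁ * g₂) = (g₁ * g₂) * x.1) := by
    intro x
    rw [← reverted_stabilizer_iff, MulAction.mem_stabilizer_iff]
    exact Prod.mk_inj
  have hstab : Nat.card {h : G | h ∈ H ∧ h * (g₁ * g₂) = (g₁ * g₂) * h ∧
        ∃ h' ∈ H, h = g₁ * h' * g₁⁻¹} = Nat.card (MulAction.stabilizer (H × H) (g₁, g₂)) := by
    symm
    refine Nat.card_congr (Equiv.ofBijective (fun x => ⟨x.1.1, x.1.1.2, ?_, x.1.2, x.1.2.2, ?_⟩)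
      ⟨?_, ?_⟩)
    · exact ((hmem x.1).1 x.2).2
    · rw [((hmem x.1).1 x.2).1]
      group
    · intro x y hxy
      have h1 : (x.1.1 : G) = y.1.1 := Subtype.mk.inj hxy
      refine Subtype.ext (Prod.ext (Subtype.ext h1) (Subtype.ext ?_))
      rw [((hmem x.1).1 x.2).1, ((hmem y.1).1 y.2).1, h1]
    · rintro ⟨h, hh, hc, h', hh', e⟩
      refine ⟨⟨(⟨h, hh⟩, ⟨h', hh'⟩), (hmem _).2 ⟨?_, hc⟩⟩, rfl⟩
      simp [e, mul_assoc]
  rw [horb, hstab, ← Nat.card_prod, sq, ← Nat.card_prod]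
  exact Nat.card_congr (MulAction.orbitProdStabilizerEquivGroup (H × H) (g₁, g₂))
end

section
/- Fix k ≥ 2 and m ≤ n. If g₁ and g₂ are permutations of ℕ fixing every r ≥ k·m (i.e. g₁, g₂ ∈ G_m) and there exist h, h' ∈ H_n with g₂ = h·g₁·h', then there exist h, h' ∈ H_m with g₂ = h·g₁·h'. (The family (S_{kn}, S_k ≀ S_n) is saturated.) -/
/-! By descending induction it suffices to pass from `l + 1` to `l`. Suppose `g₂ = h₁ * g₁ * h₂` with
`h₁, h₂ ∈ H_{l+1}` and `g₁, g₂ ∈ G_l`. Replace `h₁` and `h₂` by their first-return maps to the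
complement of the last block `Γ_l`, extended by the identity on `Γ_l`. As the `hᵢ` permute the
blocks, an orbit leaving the complement returns after at most two steps, and the first-return maps
lie in `H_l`. Since `g₁` and `g₂` are the identity on `Γ_l`, the factorization survives: if
`h₂ x ∈ Γ_l`, then `h₁ (g₁ (h₂ (h₂ x))) = g₂ (h₂ x) = h₂ x = g₁ (h₂ x)`, so one more
application of `h₁` gives `g₂ x`. -/

/-- A permutation of `ℕ` is block-preserving (for block size `k`) if elements lying in a
common block `Γ_i = {k*i, …, k*i+k-1}` are mapped to elements lying in a common block:
`⌊r/k⌋ = ⌊s/k⌋` implies `⌊h r/k⌋ = ⌊h s/k⌋`. -/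
def BlockPreserving (k : ℕ) (h : Equiv.Perm ℕ) : Prop :=
  ∀ r s : ℕ, r / k = s / k → h r / k = h s / k

/-- Membership in `G_n`: permutations of `ℕ` fixing every `r ≥ k*n`. -/
def InG (k n : ℕ) (g : Equiv.Perm ℕ) : Prop :=
  ∀ r : ℕ, k * n ≤ r → g r = r

/-- Membership in `H_n = S_k ≀ S_n`: block-preserving elements of `G_n`. -/
def InH (k n : ℕ) (h : Equiv.Perm ℕ) : Prop :=
  InG k n h ∧ BlockPreserving k h

/-- The `i`-th block `Γ_i = {k*i, …, k*i+k-1}`. -/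
def Block (k i : ℕ) : Set ℕ := {r | r / k = i}

/-- `g` is a minimal representative: (a) whenever `g` maps a block `Γ_i` onto a block
`Γ_j` then `i = j`; (b) whenever `p (g s) = p s` then `g s = s`. -/
def MinimalRep (k : ℕ) (g : Equiv.Perm ℕ) : Prop :=
  (∀ i j : ℕ, ⇑g '' Block k i = Block k j → i = j) ∧
  (∀ s : ℕ, g s / k = s / k → g s = s)

/-- The `H`-support `[g]_H` of `g`: the union of those blocks `Γ_i` whose image
`g(Γ_i)` is not equal to any block `Γ_j`. -/
def HSupport (k : ℕ) (g : Equiv.Perm ℕ) : Set ℕ :=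
  {r | ∀ j : ℕ, ⇑g '' Block k (r / k) ≠ Block k j}

/-- A block-preserving permutation maps each block injectively into a block of the same
cardinality, hence onto it; so distinct blocks have distinct images. -/
lemma BlockPreserving.iff {k : ℕ} (hk : 0 < k) {h : Equiv.Perm ℕ} (hb : BlockPreserving k h)
    (r s : ℕ) : h r / k = h s / k ↔ r / k = s / k := by
  refine ⟨fun e => ?_, hb r s⟩
  have mem (i x : ℕ) : x ∈ Finset.Ico (i * k) (i * k + k) ↔ x / k = i := by
    rw [Finset.mem_Ico, Nat.div_eq_iff hk]
    omega
  have sub : (Finset.Ico (r / k * k) (r / k * k + k)).image h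
      ⊆ Finset.Ico (h r / k * k) (h r / k * k + k) := by
    intro y hy
    obtain ⟨x, hx, rfl⟩ := Finset.mem_image.1 hy
    exact (mem _ _).2 (hb _ _ ((mem _ _).1 hx))
  have eq := Finset.eq_of_subset_of_card_le sub (by
    rw [Finset.card_image_of_injective _ h.injective]; simp)
  have hs : h s ∈ Finset.Ico (h r / k * k) (h r / k * k + k) := (mem _ _).2 e.symm
  rw [← eq] at hs
  obtain ⟨x, hx, hxs⟩ := Finset.mem_image.1 hs
  rw [← h.injective hxs]
  exact ((mem _ _).1 hx).symm

lemma BlockPreserving.inv {k : ℕ} (hk : 0 < k) {h : Equiv.Perm ℕ} (hb : BlockPreserving k h) :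
    BlockPreserving k h⁻¹ := by
  intro r s e
  apply (hb.iff hk _ _).1
  simpa using e

/-- The identity on `Γ_l`, and the first-return map of `h` to the complement of `Γ_l` elsewhere,
when `h` is block-preserving: an orbit that enters `Γ_l` from outside leaves it at the next step. -/
def firstReturn (k l : ℕ) (h : Equiv.Perm ℕ) (x : ℕ) : ℕ :=
  if x / k = l then x else if h x / k = l then h (h x) else h x

lemma firstReturn_inv {k l : ℕ} (hk : 0 < k) {h : Equiv.Perm ℕ} (hb : BlockPreserving k h)
    (x : ℕ) : firstReturn k l h⁻¹ (firstReturn k l h x) = x := by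
  unfold firstReturn
  by_cases h1 : x / k = l
  · simp [h1]
  · by_cases h2 : h x / k = l
    · have h3 : h (h x) / k ≠ l := fun h3 => h1 (((hb.iff hk _ _).1 (h3.trans h2.symm)).symm.trans h2)
      simp [h1, h2, h3]
    · simp [h1, h2]

/-- The first-return map lies in `H_l` when `h ∈ H_{l+1}`. -/
lemma exists_firstReturn {k l : ℕ} (hk : 0 < k) {h : Equiv.Perm ℕ} (hh : InH k (l + 1) h) :
    ∃ h' : Equiv.Perm ℕ, InH k l h' ∧ ∀ x, h' x = firstReturn k l h x := by
  obtain ⟨hg, hb⟩ := hh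
  refine ⟨⟨firstReturn k l h, firstReturn k l h⁻¹, firstReturn_inv hk hb, fun x => ?_⟩,
    ⟨fun r hr => ?_, fun r s e => ?_⟩, fun x => rfl⟩
  · simpa using firstReturn_inv (l := l) hk (hb.inv hk) x
  · change firstReturn k l h r = r
    unfold firstReturn
    by_cases h1 : r / k = l
    · simp [h1]
    · have h2 : l ≤ r / k := (Nat.le_div_iff_mul_le hk).2 (by rwa [mul_comm])
      have h3 : l + 1 ≤ r / k := by omega
      have h4 : h r = r := hg r (by
        rw [mul_comm]; exact (Nat.le_div_iff_mul_le hk).1 h3)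
      simp [h1, h4]
  · change firstReturn k l h r / k = firstReturn k l h s / k
    have e1 := hb _ _ e
    have e2 := hb _ _ e1
    unfold firstReturn
    rw [e, e1]
    split_ifs <;> assumption

lemma saturated_step {k l : ℕ} (hk : 0 < k) {g₁ g₂ : Equiv.Perm ℕ} (hg₁ : InG k l g₁)
    (hg₂ : InG k l g₂)
    (h : ∃ h₁ h₂ : Equiv.Perm ℕ, InH k (l + 1) h₁ ∧ InH k (l + 1) h₂ ∧ g₂ = h₁ * g₁ * h₂) :
    ∃ h₁ h₂ : Equiv.Perm ℕ, InH k l h₁ ∧ InH k l h₂ ∧ g₂ = h₁ * g₁ * h₂ := by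
  obtain ⟨h₁, h₂, hh₁, hh₂, e⟩ := h
  obtain ⟨h₁', hh₁', e₁⟩ := exists_firstReturn hk hh₁
  obtain ⟨h₂', hh₂', e₂⟩ := exists_firstReturn hk hh₂
  refine ⟨h₁', h₂', hh₁', hh₂', ?_⟩
  have e' (x : ℕ) : h₁ (g₁ (h₂ x)) = g₂ x := by rw [e]; rfl
  have fix {g : Equiv.Perm ℕ} (hg : InG k l g) {x : ℕ} (hx : x / k = l) : g x = x := by
    apply hg
    rw [← hx]
    exact Nat.mul_div_le x k
  have out {g : Equiv.Perm ℕ} (hg : InG k l g) {x : ℕ} (hx : x / k ≠ l) : g x / k ≠ l := by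
    intro hgx
    have := g.injective (fix hg hgx)
    rw [this] at hgx
    exact hx hgx
  ext x
  change g₂ x = h₁' (g₁ (h₂' x))
  rw [e₁, e₂]
  unfold firstReturn
  by_cases p : x / k = l
  · simp [p, fix hg₁ p, fix hg₂ p]
  · by_cases q : h₂ x / k = l
    · have r : h₂ (h₂ x) / k ≠ l :=
        fun r => p (((hh₂.2.iff hk _ _).1 (r.trans q.symm)).symm.trans q)
      have t : h₁ (h₂ x) = g₂ x := by rw [← e' x, fix hg₁ q]
      simp [p, q, out hg₁ r, e', fix hg₂ q, t]
    · simp [p, q, out hg₁ q, e', out hg₂ p]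

/-- Fix `k ≥ 2` and `m ≤ n`. If `g₁, g₂ ∈ G_m` lie in the same
`H_n`-double coset then they lie in the same `H_m`-double coset: the family
`(S_{kn}, S_k ≀ S_n)` is saturated. -/
theorem wreath_family_saturated (k m n : ℕ) (hk : 2 ≤ k) (hmn : m ≤ n)
    (g₁ g₂ : Equiv.Perm ℕ) (hg₁ : InG k m g₁) (hg₂ : InG k m g₂)
    (h : ∃ h₁ h₂ : Equiv.Perm ℕ, InH k n h₁ ∧ InH k n h₂ ∧ g₂ = h₁ * g₁ * h₂) :
    ∃ h₁ h₂ : Equiv.Perm ℕ, InH k m h₁ ∧ InH k m h₂ ∧ g₂ = h₁ * g₁ * h₂ := by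
  induction n, hmn using Nat.le_induction with
  | base => exact h
  | succ n hmn ih =>
    have mono {g : Equiv.Perm ℕ} (hg : InG k m g) : InG k n g :=
      fun r hr => hg r ((Nat.mul_le_mul_left k hmn).trans hr)
    exact ih (saturated_step (by omega) (mono hg₁) (mono hg₂) h)
end

section
/- Fix k ≥ 2 and n ∈ ℕ. For every permutation g ∈ G_n there exist h₁, h₂ ∈ H_n such that h₁·g·h₂ is a minimal representative; in particular every H_n-double coset in G_n contains a minimal representative. -/
theorem InG.mul {k n : ℕ} {g h : Equiv.Perm ℕ} (hg : InG k n g) (hh : InG k n h) :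
    InG k n (g * h) := by
  intro r hr
  rw [Equiv.Perm.mul_apply, hh r hr, hg r hr]

theorem InH.mul {k n : ℕ} {g h : Equiv.Perm ℕ} (hg : InH k n g) (hh : InH k n h) :
    InH k n (g * h) :=
  ⟨hg.1.mul hh.1, fun r s hrs => hg.2 _ _ (hh.2 r s hrs)⟩

theorem InH.one (k n : ℕ) : InH k n 1 :=
  ⟨fun _ _ => rfl, fun _ _ h => h⟩

/-- A failure of condition (b) can be repaired by a transposition within a block, without losing
fixed points. -/
theorem exists_improve_point {k n : ℕ} {g : Equiv.Perm ℕ} (hg : InG k n g) {s : ℕ}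
    (hs : g s / k = s / k) (hne : g s ≠ s) :
    ∃ h : Equiv.Perm ℕ, InH k n h ∧ (∀ t, g t = t → h t = t) ∧ h (g s) = s := by
  have hblock : ∀ r, Equiv.swap s (g s) r / k = r / k := by
    intro r
    rw [Equiv.swap_apply_def]
    split_ifs with h1 h2
    · rw [h1, hs]
    · rw [h2, hs]
    · rfl
  have hfix : ∀ t, g t = t → Equiv.swap s (g s) t = t := by
    intro t ht
    refine Equiv.swap_apply_of_ne_of_ne ?_ ?_
    · rintro rfl
      exact hne ht
    · rintro rfl
      exact hne (g.injective ht)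
  exact ⟨Equiv.swap s (g s),
    ⟨fun r hr => hfix r (hg r hr), fun r t hrt => by rw [hblock, hblock, hrt]⟩,
    hfix, Equiv.swap_apply_right _ _⟩

/-- A failure of condition (a) can be repaired by an involution exchanging the two blocks,
without losing fixed points. -/
theorem exists_improve_block {k n : ℕ} {g : Equiv.Perm ℕ} (hg : InG k n g) {i j : ℕ}
    (hij : ⇑g '' Block k i = Block k j) (hne : i ≠ j) :
    ∃ h : Equiv.Perm ℕ, InH k n h ∧ (∀ t, g t = t → h t = t) ∧
      ∀ s, s / k = i → h (g s) = s := by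
  have hmap : ∀ r, r / k = i → g r / k = j := fun r hr =>
    hij.subset (Set.mem_image_of_mem g (show r ∈ Block k i from hr))
  have hinv : ∀ r, r / k = j → g.symm r / k = i := by
    intro r hr
    obtain ⟨t, ht, rfl⟩ := hij.superset (show r ∈ Block k j from hr)
    rw [Equiv.symm_apply_apply]
    exact ht
  let f : ℕ → ℕ := fun r => if r / k = i then g r else if r / k = j then g.symm r else r
  have hf : Function.Involutive f := by
    intro r
    by_cases h1 : r / k = i
    · simp [f, h1, hmap r h1, hne.symm]
    · by_cases h2 : r / k = j
      · simp [f, h2, hinv r h2, hne.symm]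
      · simp [f, h1, h2]
  have hblock : ∀ r, f r / k = if r / k = i then j else if r / k = j then i else r / k := by
    intro r
    dsimp only [f]
    split_ifs with h1 h2
    · exact hmap r h1
    · exact hinv r h2
    · rfl
  have hfix : ∀ t, g t = t → f t = t := by
    intro t ht
    dsimp only [f]
    split_ifs with h1 h2
    · exact ht
    · rw [Equiv.symm_apply_eq, ht]
    · rfl
  refine ⟨hf.toPerm, ⟨fun r hr => hfix r (hg r hr), fun r t hrt => ?_⟩, hfix, fun s hs => ?_⟩
  · simp only [Function.Involutive.coe_toPerm, hblock, hrt]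
  · simp [f, hmap s hs, hne.symm]

/-- Strong induction on (a bound for) the number of points moved by `g`. -/
theorem exists_left_minimalRep {k n : ℕ} (hk : 0 < k) (m : ℕ) (g : Equiv.Perm ℕ)
    (hg : InG k n g) (hm : ((Finset.range (k * n)).filter fun r => g r ≠ r).card ≤ m) :
    ∃ h : Equiv.Perm ℕ, InH k n h ∧ MinimalRep k (h * g) := by
  induction m using Nat.strong_induction_on generalizing g with
  | _ m ih =>
  have key : ∀ (h : Equiv.Perm ℕ) (s : ℕ), InH k n h → (∀ t, g t = t → h t = t) →
      h (g s) = s → g s ≠ s → ∃ h : Equiv.Perm ℕ, InH k n h ∧ MinimalRep k (h * g) := by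
    intro h s hH hfix hs hne
    have hlt : ((Finset.range (k * n)).filter fun r => (h * g) r ≠ r).card < m := by
      refine lt_of_lt_of_le (Finset.card_lt_card ?_) hm
      rw [Finset.ssubset_iff_of_subset]
      · refine ⟨s, ?_, ?_⟩
        · simp only [Finset.mem_filter, Finset.mem_range]
          exact ⟨not_le.mp fun hle => hne (hg s hle), hne⟩
        · exact fun hmem => (Finset.mem_filter.mp hmem).2 hs
      · refine Finset.monotone_filter_right _ fun r _ hr hgr => hr ?_
        rw [Equiv.Perm.mul_apply, hgr, hfix r hgr]
    obtain ⟨h', hH', hmin⟩ := ih _ hlt (h * g) (hH.1.mul hg) le_rfl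
    exact ⟨h' * h, hH'.mul hH, by rwa [mul_assoc]⟩
  by_cases hmin : MinimalRep k g
  · exact ⟨1, InH.one k n, by rwa [one_mul]⟩
  rw [MinimalRep, not_and_or] at hmin
  rcases hmin with ha | hb
  · push Not at ha
    obtain ⟨i, j, hij, hne⟩ := ha
    obtain ⟨h, hH, hfix, hs⟩ := exists_improve_block hg hij hne
    have hi : k * i / k = i := Nat.mul_div_cancel_left i hk
    refine key h (k * i) hH hfix (hs _ hi) fun heq => hne ?_
    have hj : g (k * i) / k = j :=
      hij.subset (Set.mem_image_of_mem g (show k * i ∈ Block k i from hi))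
    rw [← hj, heq, hi]
  · push Not at hb
    obtain ⟨s, hs, hne⟩ := hb
    obtain ⟨h, hH, hfix, hs'⟩ := exists_improve_point hg hs hne
    exact key h s hH hfix hs' hne

/-- Fix `k ≥ 2` and `n ∈ ℕ`. For every `g ∈ G_n` there exist
`h₁, h₂ ∈ H_n` such that `h₁ * g * h₂` is a minimal representative; in particular
every `H_n`-double coset in `G_n` contains a minimal representative. -/
theorem exists_minimal_representative (k n : ℕ) (hk : 2 ≤ k)
    (g : Equiv.Perm ℕ) (hg : InG k n g) :
    ∃ h₁ h₂ : Equiv.Perm ℕ, InH k n h₁ ∧ InH k n h₂ ∧ MinimalRep k (h₁ * g * h₂) := by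
  obtain ⟨h, hH, hmin⟩ := exists_left_minimalRep (by omega) _ g hg le_rfl
  exact ⟨h, 1, hH, InH.one k n, by rwa [mul_one]⟩
end

section
/- Fix k ≥ 2. If a permutation g of ℕ with finite support is a minimal representative and h is a block-preserving permutation of ℕ with finite support, then the conjugate h·g·h⁻¹ is also a minimal representative. (Minimal elements are closed under conjugation by elements of H_∞.) -/
theorem block_eq_coe_Ico {k : ℕ} (hk : 0 < k) (i : ℕ) :
    Block k i = ↑(Finset.Ico (k * i) (k * i + k)) := by
  ext r
  simp only [Block, Set.mem_ofPred_eq, Finset.coe_Ico, Set.mem_Ico, Nat.div_eq_iff hk]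
  rw [mul_comm i k]
  omega

theorem BlockPreserving.image_block {k : ℕ} (hk : 0 < k) {h : Equiv.Perm ℕ}
    (hbp : BlockPreserving k h) (r : ℕ) : h '' Block k (r / k) = Block k (h r / k) := by
  refine Set.eq_of_subset_of_ncard_le ?_ ?_ ?_
  · rintro _ ⟨s, hs, rfl⟩
    exact hbp s r hs
  · rw [Set.ncard_image_of_injective _ h.injective]
    simp [block_eq_coe_Ico hk, Set.ncard_coe_finset, -Finset.coe_Ico]
  · rw [block_eq_coe_Ico hk]
    exact Finset.finite_toSet _

theorem BlockPreserving.div_eq_iff {k : ℕ} (hk : 0 < k) {h : Equiv.Perm ℕ}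
    (hbp : BlockPreserving k h) (r s : ℕ) : h r / k = h s / k ↔ r / k = s / k := by
  refine ⟨fun e => ?_, hbp r s⟩
  have hmem : h r ∈ h '' Block k (s / k) := by
    rw [hbp.image_block hk]
    exact e
  obtain ⟨t, ht, hte⟩ := hmem
  rwa [h.injective hte] at ht

/-- Fix `k ≥ 2`. If a finitely supported permutation `g` of `ℕ` is a
minimal representative and `h` is a finitely supported block-preserving permutation,
then `h * g * h⁻¹` is also a minimal representative: minimal elements are closed under
conjugation by elements of `H_∞`. -/
theorem minimalRep_conj (k : ℕ) (hk : 2 ≤ k) (g h : Equiv.Perm ℕ)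
    (hgfin : {r : ℕ | g r ≠ r}.Finite) (hmin : MinimalRep k g)
    (hhfin : {r : ℕ | h r ≠ r}.Finite) (hbp : BlockPreserving k h) :
    MinimalRep k (h * g * h⁻¹) := by
  have hk0 : 0 < k := by omega
  obtain ⟨ha, hb⟩ := hmin
  constructor
  · intro i j hij
    -- Every block is the `h`-image of a block, so name `Γ_i` and `Γ_j` by preimages `a`, `b`
    -- of their first elements.
    obtain ⟨a, ha'⟩ := h.surjective (k * i)
    obtain ⟨b, hb'⟩ := h.surjective (k * j)
    have hi : h a / k = i := by rw [ha', Nat.mul_div_cancel_left _ hk0]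
    have hj : h b / k = j := by rw [hb', Nat.mul_div_cancel_left _ hk0]
    rw [← hi, ← hj, ← hbp.image_block hk0, ← hbp.image_block hk0, ← Set.image_comp] at hij
    have hcomp : ⇑(h * g * h⁻¹) ∘ ⇑h = ⇑h ∘ ⇑g := by
      ext x
      simp
    rw [hcomp, Set.image_comp] at hij
    rw [← hi, ← hj]
    exact hbp a b (ha _ _ (h.injective.image_injective hij))
  · intro s hs
    obtain ⟨t, rfl⟩ := h.surjective s
    have hconj : (h * g * h⁻¹) (h t) = h (g t) := by simp
    rw [hconj] at hs ⊢
    rw [hb t ((hbp.div_eq_iff hk0 _ _).mp hs)]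
end

section
/- Fix k ≥ 2 and n ∈ ℕ, and let g ∈ G_n be a minimal representative. The multiplication map (h₁,h₂) ↦ h₁·h₂ is a bijection from the set of pairs (h₁,h₂), where h₁ is a block-preserving permutation with support contained in [g]_H commuting with g, and h₂ is a block-preserving permutation with support contained in {0,…,kn−1} ∖ [g]_H, onto the centralizer C_{H_n}(g) = {h ∈ H_n : h·g = g·h}. In particular C_{H_n}(g) = C_{H_{[g]_H}}(g) ⊕ H_{{0,…,kn−1}∖[g]_H} as an internal direct product. -/
/-- A block-preserving permutation maps the block of `r` onto the block of its image: it maps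
it injectively into that block, and both have `k` elements. -/
lemma BlockPreserving.exists_preimage {k : ℕ} (hk : 0 < k) {h : Equiv.Perm ℕ}
    (hb : BlockPreserving k h) {r s : ℕ} (hs : s / k = h r / k) :
    ∃ t, t / k = r / k ∧ h t = s := by
  have mem : ∀ i x, x ∈ Finset.Ico (k * i) (k * i + k) ↔ x / k = i := by
    intro i x
    rw [Finset.mem_Ico, Nat.div_eq_iff hk, mul_comm]
    omega
  have himg : (Finset.Ico (k * (r / k)) (k * (r / k) + k)).image h =
      Finset.Ico (k * (h r / k)) (k * (h r / k) + k) := by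
    refine Finset.eq_of_subset_of_card_le ?_ ?_
    · intro y hy
      obtain ⟨x, hx, rfl⟩ := Finset.mem_image.1 hy
      exact (mem _ _).2 (hb x r ((mem _ _).1 hx))
    · rw [Finset.card_image_of_injective _ h.injective]
      simp
  have hs' := (mem _ _).2 hs
  rw [← himg] at hs'
  obtain ⟨t, ht, hts⟩ := Finset.mem_image.1 hs'
  exact ⟨t, (mem _ _).1 ht, hts⟩

lemma not_mem_hSupport_iff {k : ℕ} {g : Equiv.Perm ℕ} (hmin : MinimalRep k g) (r : ℕ) :
    r ∉ HSupport k g ↔ ∀ s, s / k = r / k → g s = s := by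
  constructor
  · intro hr s hs
    simp only [HSupport, Set.mem_ofPred_eq, not_forall, not_not] at hr
    obtain ⟨j, hj⟩ := hr
    have hij := hmin.1 _ _ hj
    have hgs : g s ∈ Block k j := hj ▸ Set.mem_image_of_mem g hs
    exact hmin.2 s (Eq.trans hgs (hij.symm.trans hs.symm))
  · intro hfix hr
    refine hr (r / k) ?_
    have himg : g '' Block k (r / k) = id '' Block k (r / k) :=
      Set.image_congr fun s hs => hfix s hs
    rw [himg, Set.image_id]

lemma hSupport_congr {k : ℕ} {g : Equiv.Perm ℕ} {r s : ℕ} (hrs : r / k = s / k) :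
    r ∈ HSupport k g ↔ s ∈ HSupport k g := by
  simp only [HSupport, Set.mem_ofPred_eq, hrs]

lemma fixed_of_not_mem_hSupport {k : ℕ} {g : Equiv.Perm ℕ} (hmin : MinimalRep k g) {r : ℕ}
    (hr : r ∉ HSupport k g) : g r = r :=
  (not_mem_hSupport_iff hmin r).1 hr r rfl

lemma lt_of_mem_hSupport {k n : ℕ} (hk : 0 < k) {g : Equiv.Perm ℕ} (hg : InG k n g)
    (hmin : MinimalRep k g) {r : ℕ} (hr : r ∈ HSupport k g) : r < k * n := by
  by_contra! hle
  refine (not_mem_hSupport_iff hmin r).2 (fun s hs => hg s ?_) hr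
  rw [mul_comm, ← Nat.le_div_iff_mul_le hk] at hle ⊢
  rwa [hs]

/-- A block-preserving `h` commuting with `g` permutes the blocks fixed pointwise by `g`, hence
preserves the `H`-support of `g`. -/
lemma mem_hSupport_iff_of_commute {k : ℕ} (hk : 0 < k) {g h : Equiv.Perm ℕ}
    (hmin : MinimalRep k g) (hb : BlockPreserving k h) (hc : h * g = g * h) (r : ℕ) :
    h r ∈ HSupport k g ↔ r ∈ HSupport k g := by
  have hc' : ∀ x, h (g x) = g (h x) := fun x => DFunLike.congr_fun hc x
  rw [← not_iff_not, not_mem_hSupport_iff hmin, not_mem_hSupport_iff hmin]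
  constructor
  · intro hfix s hs
    apply h.injective
    rw [hc', hfix _ (hb s r hs)]
  · intro hfix s hs
    obtain ⟨t, ht, rfl⟩ := hb.exists_preimage hk hs
    rw [← hc', hfix t ht]

/-- If a block-preserving permutation preserves a union `P` of blocks, then the permutation
that agrees with it on `P` and is the identity elsewhere is block-preserving too. -/
lemma BlockPreserving.ofSubtype {k : ℕ} {h : Equiv.Perm ℕ} (hb : BlockPreserving k h)
    {P : ℕ → Prop} [DecidablePred P] (hP : ∀ r, P (h r) ↔ P r)
    (hblock : ∀ r s, r / k = s / k → (P r ↔ P s)) :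
    BlockPreserving k (Equiv.Perm.ofSubtype (h.subtypePerm hP)) := by
  intro r s hrs
  by_cases hr : P r
  · rw [Equiv.Perm.ofSubtype_apply_of_mem _ hr,
      Equiv.Perm.ofSubtype_apply_of_mem _ ((hblock r s hrs).1 hr)]
    exact hb r s hrs
  · rwa [Equiv.Perm.ofSubtype_apply_of_not_mem _ hr,
      Equiv.Perm.ofSubtype_apply_of_not_mem _ (fun hs => hr ((hblock r s hrs).2 hs))]

/-- Fix `k ≥ 2`, `n ∈ ℕ` and let `g ∈ G_n` be a minimal
representative. Multiplication `(h₁, h₂) ↦ h₁ * h₂` is a bijection from the set of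
pairs where `h₁ ∈ C_{H_{[g]_H}}(g)` (block-preserving, support in `[g]_H`, commuting
with `g`) and `h₂ ∈ H_{{0,…,kn−1} ∖ [g]_H}` (block-preserving with support in
`{0,…,kn−1} ∖ [g]_H`), onto the centralizer `C_{H_n}(g)`. -/
theorem centralizer_direct_sum_decomposition (k n : ℕ) (hk : 2 ≤ k)
    (g : Equiv.Perm ℕ) (hg : InG k n g) (hmin : MinimalRep k g) :
    Set.BijOn (fun p : Equiv.Perm ℕ × Equiv.Perm ℕ => p.1 * p.2)
      {p : Equiv.Perm ℕ × Equiv.Perm ℕ |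
        (BlockPreserving k p.1 ∧ (∀ r : ℕ, p.1 r ≠ r → r ∈ HSupport k g) ∧
          p.1 * g = g * p.1) ∧
        (BlockPreserving k p.2 ∧
          ∀ r : ℕ, p.2 r ≠ r → r < k * n ∧ r ∉ HSupport k g)}
      {h : Equiv.Perm ℕ | InH k n h ∧ h * g = g * h} := by
  classical
  have hk0 : 0 < k := by omega
  refine ⟨?_, ?_, ?_⟩
  · rintro ⟨h₁, h₂⟩ ⟨⟨hb₁, hs₁, hc₁⟩, hb₂, hs₂⟩
    refine ⟨⟨fun r hr => ?_, fun r s hrs => hb₁ _ _ (hb₂ _ _ hrs)⟩, ?_⟩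
    · have e₂ : h₂ r = r := by
        by_contra hne
        exact absurd (hs₂ r hne).1 (by omega)
      have e₁ : h₁ r = r := by
        by_contra hne
        exact absurd (lt_of_mem_hSupport hk0 hg hmin (hs₁ r hne)) (by omega)
      simp only [Equiv.Perm.mul_apply, e₂, e₁]
    · have hdisj : Equiv.Perm.Disjoint h₂ g := by
        intro r
        by_cases hr : r ∈ HSupport k g
        · exact Or.inl (not_not.1 fun hne => (hs₂ r hne).2 hr)
        · exact Or.inr (fixed_of_not_mem_hSupport hmin hr)
      exact Commute.mul_left (show Commute h₁ g from hc₁) hdisj.commute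
  · rintro ⟨h₁, h₂⟩ ⟨⟨-, hs₁, -⟩, -, hs₂⟩ ⟨h₁', h₂'⟩ ⟨⟨-, hs₁', -⟩, -, hs₂'⟩ heq
    simp only at heq hs₁ hs₂ hs₁' hs₂'
    have e : h₁ = h₁' := by
      ext r
      by_cases hr : r ∈ HSupport k g
      · have a : h₂ r = r := not_not.1 fun hne => (hs₂ r hne).2 hr
        have a' : h₂' r = r := not_not.1 fun hne => (hs₂' r hne).2 hr
        have := DFunLike.congr_fun heq r
        rwa [Equiv.Perm.mul_apply, Equiv.Perm.mul_apply, a, a'] at this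
      · rw [not_not.1 fun hne => hr (hs₁ r hne), not_not.1 fun hne => hr (hs₁' r hne)]
    subst e
    rw [mul_left_cancel heq]
  · rintro h ⟨⟨hG, hb⟩, hc⟩
    have hS := mem_hSupport_iff_of_commute hk0 hmin hb hc
    have hS' : ∀ r, h r ∉ HSupport k g ↔ r ∉ HSupport k g := fun r => not_congr (hS r)
    have hgS : ∀ r, g r ∈ HSupport k g ↔ r ∈ HSupport k g := by
      -- `g` fixes every point off its `H`-support, so it preserves the `H`-support.
      intro r
      by_cases hr : r ∈ HSupport k g
      · refine iff_of_true (by_contra fun hgr => ?_) hr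
        have := g.injective (fixed_of_not_mem_hSupport hmin hgr)
        exact hgr (this.symm ▸ hr)
      · rw [fixed_of_not_mem_hSupport hmin hr]
    refine ⟨(Equiv.Perm.ofSubtype (h.subtypePerm hS), Equiv.Perm.ofSubtype (h.subtypePerm hS')),
      ⟨⟨hb.ofSubtype hS fun r s => hSupport_congr, fun r hr => ?_, ?_⟩,
        hb.ofSubtype hS' fun r s hrs => not_congr (hSupport_congr hrs), fun r hr => ?_⟩, ?_⟩
    · by_contra hn
      exact hr (Equiv.Perm.ofSubtype_apply_of_not_mem _ hn)
    · ext r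
      simp only [Equiv.Perm.mul_apply]
      by_cases hr : r ∈ HSupport k g
      · rw [Equiv.Perm.ofSubtype_apply_of_mem _ hr,
          Equiv.Perm.ofSubtype_apply_of_mem _ ((hgS r).2 hr)]
        exact DFunLike.congr_fun hc r
      · rw [fixed_of_not_mem_hSupport hmin hr, Equiv.Perm.ofSubtype_apply_of_not_mem _ hr,
          fixed_of_not_mem_hSupport hmin hr]
    · have hn : r ∉ HSupport k g := by
        by_contra hn
        exact hr (Equiv.Perm.ofSubtype_apply_of_not_mem _ (not_not.2 hn))
      refine ⟨?_, hn⟩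
      by_contra! hle
      apply hr
      simp only [Equiv.Perm.ofSubtype_apply_of_mem (p := fun r => r ∉ HSupport k g) _ hn]
      exact hG r hle
    · ext r
      simp only [Equiv.Perm.mul_apply]
      by_cases hr : r ∈ HSupport k g
      · rw [Equiv.Perm.ofSubtype_apply_of_not_mem (p := fun r => r ∉ HSupport k g) _
            (not_not.2 hr),
          Equiv.Perm.ofSubtype_apply_of_mem _ hr]
        rfl
      · rw [Equiv.Perm.ofSubtype_apply_of_mem (p := fun r => r ∉ HSupport k g) _ hr]
        exact Equiv.Perm.ofSubtype_apply_of_not_mem _ ((hS' r).2 hr)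
end

section
/- Fix k ≥ 2 and m ∈ ℕ, and let g₁, g₂ ∈ G_m be such that both g₁ and g₁·g₂ are minimal representatives. Then there exists a polynomial P with rational coefficients such that for every n ≥ m, the cardinality of the centralizer C_{H_n}(g₁g₂) equals P(n) times the cardinality of the intersection C_{H_n}(g₁g₂) ∩ g₁·H_n·g₁⁻¹; that is, the index-type quotient |C_{H_n}(g₁g₂)| / |C_{H_n}(g₁g₂) ∩ g₁H_ng₁⁻¹| is a polynomial function of n. -/
namespace CentralizerIndex

open Finset

/-! ### Block-preserving permutations -/

lemma _root_.InG.mono {k n n' : ℕ} (hn : n ≤ n') {h : Equiv.Perm ℕ} (hh : InG k n h) : InG k n' h :=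
  fun r hr => hh r ((Nat.mul_le_mul_left k hn).trans hr)

lemma _root_.InG.mul_s15 {k n : ℕ} {g h : Equiv.Perm ℕ} (hg : InG k n g) (hh : InG k n h) :
    InG k n (g * h) := fun r hr => by
  rw [Equiv.Perm.mul_apply, hh r hr, hg r hr]

lemma _root_.InG.inv {k n : ℕ} {g : Equiv.Perm ℕ} (hg : InG k n g) : InG k n g⁻¹ := fun r hr => by
  rw [Equiv.Perm.inv_eq_iff_eq, hg r hr]

lemma _root_.InG.lt {k n : ℕ} {g : Equiv.Perm ℕ} (hg : InG k n g) {r : ℕ} (hr : r < k * n) :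
    g r < k * n := by
  by_contra! hc
  exact absurd (g.injective (hg _ hc)) (by omega)

lemma _root_.BlockPreserving.mul_s15 {k : ℕ} {g h : Equiv.Perm ℕ} (hg : BlockPreserving k g)
    (hh : BlockPreserving k h) : BlockPreserving k (g * h) :=
  fun r s hrs => hg _ _ (hh r s hrs)

lemma _root_.InH.mul_s15 {k n : ℕ} {g h : Equiv.Perm ℕ} (hg : InH k n g) (hh : InH k n h) :
    InH k n (g * h) := ⟨InG.mul_s15 hg.1 hh.1, BlockPreserving.mul_s15 hg.2 hh.2⟩

lemma finite_inG (k n : ℕ) : Finite {h : Equiv.Perm ℕ | InG k n h} := by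
  have e := Equiv.Perm.subtypeEquivSubtypePerm (fun r : ℕ => r < k * n)
  have : Finite {r : ℕ // r < k * n} := (Set.finite_lt_nat (k * n)).to_subtype
  have : Finite {f : Equiv.Perm ℕ // ∀ a, ¬ a < k * n → f a = a} := Finite.of_equiv _ e
  refine Finite.of_injective
    (fun h : {h : Equiv.Perm ℕ | InG k n h} =>
      (⟨h.1, fun a ha => h.2 a (not_lt.mp ha)⟩ :
        {f : Equiv.Perm ℕ // ∀ a, ¬ a < k * n → f a = a})) ?_
  intro a b hab
  exact Subtype.ext (Subtype.mk.inj hab)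

/-- A block-preserving permutation restricts to a bijection between the block `i` and its image
block; `σ` is this bijection in the coordinates `r % k`. -/
lemma _root_.BlockPreserving.exists_perm {k : ℕ} (hk : 0 < k) {h : Equiv.Perm ℕ}
    (hh : BlockPreserving k h) (i : ℕ) :
    ∃ σ : Equiv.Perm (Fin k), ∀ j : Fin k, h (k * i + j) = k * (h (k * i) / k) + σ j := by
  have hdiv : ∀ j : Fin k, h (k * i + j) / k = h (k * i) / k := fun j => hh _ _ (by
    rw [Nat.mul_add_div hk, Nat.div_eq_of_lt j.2, Nat.mul_div_cancel_left _ hk, add_zero])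
  have hval : ∀ j : Fin k, h (k * i + j) = k * (h (k * i) / k) + h (k * i + j) % k := fun j => by
    rw [← hdiv j, Nat.div_add_mod]
  let f : Fin k → Fin k := fun j => ⟨h (k * i + j) % k, Nat.mod_lt _ hk⟩
  have hf : Function.Injective f := fun a b hab => by
    have h1 : h (k * i + a) % k = h (k * i + b) % k := congrArg Fin.val hab
    have h2 : h (k * i + a) = h (k * i + b) := by rw [hval a, hval b, h1]
    exact Fin.ext (by simpa using h.injective h2)
  exact ⟨Equiv.ofBijective f (Finite.injective_iff_bijective.mp hf), fun j => hval j⟩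

lemma _root_.BlockPreserving.exists_preimage_s15 {k : ℕ} (hk : 0 < k) {h : Equiv.Perm ℕ}
    (hh : BlockPreserving k h) {r s : ℕ} (hs : s / k = h r / k) :
    ∃ s', s' / k = r / k ∧ h s' = s := by
  obtain ⟨σ, hσ⟩ := hh.exists_perm hk (r / k)
  have h1 : h (k * (r / k)) / k = h r / k := hh _ _ (Nat.mul_div_cancel_left _ hk)
  refine ⟨k * (r / k) + σ.symm ⟨s % k, Nat.mod_lt _ hk⟩, ?_, ?_⟩
  · rw [Nat.mul_add_div hk, Nat.div_eq_of_lt (Fin.is_lt _), add_zero]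
  · rw [hσ, h1, ← hs, Equiv.apply_symm_apply, Nat.div_add_mod]

/-- The permutation of `ℕ` exchanging the blocks `n` and `i`, with block `n` sent to block `i`
through `σ` in the coordinates `r % k`, and block `i` sent to block `n` by translation
(if `i = n`, block `n` is permuted by `σ`). -/
noncomputable def tau (k : ℕ) [NeZero k] (n i : ℕ) (σ : Equiv.Perm (Fin k)) : Equiv.Perm ℕ :=
  (Nat.divModEquiv k).symm.permCongr
    (Equiv.prodShear (Equiv.swap n i) (fun b => if b = n then σ else 1))

section tau

variable {k : ℕ} [NeZero k] {n i : ℕ} {σ : Equiv.Perm (Fin k)}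

lemma tau_apply (r : ℕ) : tau k n i σ r =
    k * Equiv.swap n i (r / k) + ((if r / k = n then σ else 1) (Fin.ofNat k r) : Fin k) := by
  simp [tau, Nat.divModEquiv, Equiv.permCongr_apply, Equiv.prodShear, mul_comm]

lemma tau_symm_apply (r : ℕ) : (tau k n i σ)⁻¹ r =
    k * Equiv.swap n i (r / k) +
      ((if Equiv.swap n i (r / k) = n then σ else 1).symm (Fin.ofNat k r) : Fin k) := by
  change (tau k n i σ).symm r = _
  simp [tau, Nat.divModEquiv, Equiv.permCongr, Equiv.equivCongr, Equiv.prodShear, mul_comm]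
  rfl

lemma tau_block (j : Fin k) : tau k n i σ (k * n + j) = k * i + σ j := by
  have hk : 0 < k := Nat.pos_of_neZero k
  have h1 : (k * n + (j : ℕ)) / k = n := by
    rw [Nat.mul_add_div hk, Nat.div_eq_of_lt j.2, add_zero]
  have h2 : Fin.ofNat k (k * n + (j : ℕ)) = j := by
    ext; simp [Nat.mod_eq_of_lt j.2]
  rw [tau_apply, h1, h2]; simp

lemma tau_div (r : ℕ) : tau k n i σ r / k = Equiv.swap n i (r / k) := by
  have hk : 0 < k := Nat.pos_of_neZero k
  rw [tau_apply, Nat.mul_add_div hk, Nat.div_eq_of_lt (Fin.is_lt _), add_zero]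

lemma tau_inv_div (r : ℕ) : (tau k n i σ)⁻¹ r / k = Equiv.swap n i (r / k) := by
  have hk : 0 < k := Nat.pos_of_neZero k
  rw [tau_symm_apply, Nat.mul_add_div hk, Nat.div_eq_of_lt (Fin.is_lt _), add_zero]

lemma tau_fix {r : ℕ} (h1 : r / k ≠ n) (h2 : r / k ≠ i) : tau k n i σ r = r := by
  rw [tau_apply, Equiv.swap_apply_of_ne_of_ne h1 h2, if_neg h1]
  simp [Nat.div_add_mod]

lemma tau_inv_fix {r : ℕ} (h1 : r / k ≠ n) (h2 : r / k ≠ i) : (tau k n i σ)⁻¹ r = r := by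
  rw [Equiv.Perm.inv_eq_iff_eq, tau_fix h1 h2]

lemma tau_inH (hi : i ≤ n) : InH k (n + 1) (tau k n i σ) := by
  have hk : 0 < k := Nat.pos_of_neZero k
  refine ⟨fun r hr => ?_, fun r s hrs => by rw [tau_div, tau_div, hrs]⟩
  have : n + 1 ≤ r / k := (Nat.le_div_iff_mul_le hk).mpr (by rwa [mul_comm])
  exact tau_fix (by omega) (by omega)

lemma tau_inv_inH (hi : i ≤ n) : InH k (n + 1) (tau k n i σ)⁻¹ :=
  ⟨InG.inv (tau_inH hi).1, fun r s hrs => by rw [tau_inv_div, tau_inv_div, hrs]⟩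

end tau

/-! ### The recursion for the cardinalities -/

/-- If `Q` is closed under products, if the block-preserving elements satisfying `Q` send blocks
outside `A` to blocks outside `A`, and if `Q` holds for all block-preserving elements fixing the
blocks of `A` pointwise, then the elements of `H_{n+1}` satisfying `Q` factor uniquely as
`tau k n i σ * h` with `i ≤ n`, `i ∉ A` and `h ∈ H_n` satisfying `Q`. -/
lemma card_succ {k n : ℕ} (hk : 0 < k) (Q : Equiv.Perm ℕ → Prop) (A : Finset ℕ)
    (hA : A ⊆ range n) (hmul : ∀ g h, Q g → Q h → Q (g * h))
    (hstab : ∀ h r, BlockPreserving k h → Q h → r / k ∉ A → h r / k ∉ A)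
    (hfix : ∀ h, BlockPreserving k h → (∀ r, r / k ∈ A → h r = r) → Q h) :
    Nat.card {h : Equiv.Perm ℕ | InH k (n + 1) h ∧ Q h} =
      (n + 1 - #A) * k.factorial * Nat.card {h : Equiv.Perm ℕ | InH k n h ∧ Q h} := by
  have : NeZero k := ⟨hk.ne'⟩
  have hnA : n ∉ A := fun h => by simpa using hA h
  have hQtau : ∀ i σ, i ∈ range (n + 1) \ A → Q (tau k n i σ) ∧ Q (tau k n i σ)⁻¹ := by
    intro i σ hi
    simp only [mem_sdiff, mem_range] at hi
    refine ⟨hfix _ (tau_inH (by omega)).2 fun r hr => tau_fix ?_ ?_,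
      hfix _ (tau_inv_inH (by omega)).2 fun r hr => tau_inv_fix ?_ ?_⟩ <;>
    · rintro rfl; tauto
  have hblock : ∀ h : Equiv.Perm ℕ, InG k n h → ∀ j : Fin k, h (k * n + j) = k * n + j :=
    fun h hh j => hh _ (Nat.le_add_right _ _)
  let F : ((range (n + 1) \ A : Finset ℕ) × Equiv.Perm (Fin k)) ×
      {h : Equiv.Perm ℕ | InH k n h ∧ Q h} → {h : Equiv.Perm ℕ | InH k (n + 1) h ∧ Q h} :=
    fun t => ⟨tau k n t.1.1 t.1.2 * t.2.1,
      InH.mul_s15 (tau_inH (by have := t.1.1.2; simp only [mem_sdiff, mem_range] at this; omega))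
        ⟨InG.mono n.le_succ t.2.2.1.1, t.2.2.1.2⟩,
      hmul _ _ (hQtau _ _ t.1.1.2).1 t.2.2.2⟩
  have hF : Function.Bijective F := by
    constructor
    · rintro ⟨⟨i, σ⟩, h⟩ ⟨⟨i', σ'⟩, h'⟩ heq
      have heq : tau k n i σ * h.1 = tau k n i' σ' * h'.1 := congrArg Subtype.val heq
      have hval : ∀ j : Fin k, k * (i : ℕ) + σ j = k * (i' : ℕ) + σ' j := fun j => by
        have := congrArg (fun f : Equiv.Perm ℕ => f (k * n + j)) heq
        simpa only [Equiv.Perm.mul_apply, hblock _ h.2.1.1, hblock _ h'.2.1.1, tau_block] using this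
      have hi : i = i' := Subtype.ext (by
        have := congrArg (· / k) (hval 0)
        simpa only [Nat.mul_add_div hk, Nat.div_eq_of_lt (Fin.is_lt _), add_zero] using this)
      subst hi
      have hσ : σ = σ' := Equiv.ext fun j => Fin.ext (by simpa using hval j)
      subst hσ
      rw [mul_right_inj] at heq
      rw [Subtype.ext heq]
    · rintro ⟨h, hH, hQ⟩
      obtain ⟨σ, hσ⟩ := hH.2.exists_perm hk n
      have hi : h (k * n) / k ∈ range (n + 1) \ A := by
        rw [mem_sdiff, mem_range]
        refine ⟨(Nat.div_lt_iff_lt_mul hk).mpr ?_, hstab h _ hH.2 hQ ?_⟩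
        · rw [mul_comm (n + 1) k]
          exact InG.lt hH.1 (Nat.mul_lt_mul_of_pos_left n.lt_succ_self hk)
        · rwa [Nat.mul_div_cancel_left _ hk]
      have hi' : h (k * n) / k ≤ n := by
        simp only [mem_sdiff, mem_range] at hi; omega
      have hH' := InH.mul_s15 (tau_inv_inH (σ := σ) hi') hH
      refine ⟨⟨⟨⟨_, hi⟩, σ⟩, ⟨(tau k n (h (k * n) / k) σ)⁻¹ * h, ⟨fun r hr => ?_, hH'.2⟩,
        hmul _ _ (hQtau _ _ hi).2 hQ⟩⟩, Subtype.ext (mul_inv_cancel_left _ _)⟩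
      by_cases hr' : k * (n + 1) ≤ r
      · exact hH'.1 r hr'
      · obtain ⟨j, rfl⟩ := Nat.exists_eq_add_of_le hr
        have hj : j < k := by rw [mul_add] at hr'; omega
        rw [Equiv.Perm.mul_apply, Equiv.Perm.inv_eq_iff_eq, hσ ⟨j, hj⟩,
          tau_block (⟨j, hj⟩ : Fin k)]
  rw [← Nat.card_eq_of_bijective F hF, Nat.card_prod, Nat.card_prod, Nat.card_eq_fintype_card,
    Fintype.card_coe, Nat.card_perm, Nat.card_fin, card_sdiff_of_subset, card_range]
  exact hA.trans (range_subset_range.mpr n.le_succ)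

/-- `∏_{a ≤ j < b} (t - j)` satisfies the recursion of `(t - a)! / (t - b)!`. -/
lemma prod_shift (a b : ℕ) (hab : a ≤ b) (t : ℚ) :
    (t + 1 - a) * ∏ j ∈ Ico a b, (t - j) = (t + 1 - b) * ∏ j ∈ Ico a b, (t + 1 - j) := by
  induction b, hab using Nat.le_induction with
  | base => simp
  | succ b hb ih =>
    rw [prod_Ico_succ_top hb, prod_Ico_succ_top hb, ← mul_assoc, ih]
    push_cast
    ring

lemma polynomial_of_recurrence {m a b c : ℕ} (hab : a ≤ b) (hbm : b ≤ m) (x y : ℕ → ℕ)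
    (hx : ∀ n, m ≤ n → x (n + 1) = (n + 1 - a) * c * x n)
    (hy : ∀ n, m ≤ n → y (n + 1) = (n + 1 - b) * c * y n) (hym : y m ≠ 0) :
    ∃ P : Polynomial ℚ, ∀ n, m ≤ n → (x n : ℚ) = P.eval (n : ℚ) * y n := by
  have hq : ∏ j ∈ Ico a b, ((m : ℚ) - j) ≠ 0 := prod_ne_zero_iff.mpr fun j hj => by
    rw [mem_Ico] at hj
    have : (j : ℚ) < m := by exact_mod_cast hj.2.trans_le hbm
    linarith
  have hym' : (y m : ℚ) ≠ 0 := by exact_mod_cast hym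
  set κ : ℚ := x m / (y m * ∏ j ∈ Ico a b, ((m : ℚ) - j)) with hκ
  refine ⟨Polynomial.C κ * ∏ j ∈ Ico a b, (Polynomial.X - Polynomial.C (j : ℚ)), fun n hn => ?_⟩
  simp only [Polynomial.eval_mul, Polynomial.eval_C, Polynomial.eval_prod, Polynomial.eval_sub,
    Polynomial.eval_X]
  induction n, hn using Nat.le_induction with
  | base => rw [hκ]; field_simp
  | succ n hn ih =>
    rw [hx n hn, hy n hn]
    push_cast [Nat.cast_sub (show a ≤ n + 1 by omega), Nat.cast_sub (show b ≤ n + 1 by omega)]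
    rw [ih]
    linear_combination κ * c * y n * prod_shift a b hab n

/-! ### Moved blocks -/

lemma stable_of_commute {k : ℕ} (hk : 0 < k) {g h : Equiv.Perm ℕ} (hh : BlockPreserving k h)
    (hc : h * g = g * h) {r : ℕ} (hr : ∀ s, s / k = r / k → g s = s) :
    ∀ s, s / k = h r / k → g s = s := by
  intro s hs
  obtain ⟨s', hs', rfl⟩ := hh.exists_preimage_s15 hk hs
  have := congrArg (fun f : Equiv.Perm ℕ => f s') hc
  simpa [Equiv.Perm.mul_apply, hr s' hs'] using this.symm

/-- If `h` and `g₁⁻¹ h g₁` preserve blocks and `g₁` fixes block `r / k`, then `g₁` maps some block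
onto the block of `h r`; minimality forces `g₁` to fix the latter pointwise. -/
lemma stable_of_conj {k : ℕ} (hk : 0 < k) {g₁ h : Equiv.Perm ℕ} (hmin : MinimalRep k g₁)
    (hh : BlockPreserving k h) (hu : BlockPreserving k (g₁⁻¹ * h * g₁)) {r : ℕ}
    (hr : ∀ s, s / k = r / k → g₁ s = s) :
    ∀ s, s / k = h r / k → g₁ s = s := by
  set u := g₁⁻¹ * h * g₁ with hu_def
  have hgu : ∀ s, s / k = r / k → g₁ (u s) = h s := fun s hs => by
    simp [hu_def, Equiv.Perm.mul_apply, hr s hs]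
  have himg : ⇑g₁ '' Block k (u r / k) = Block k (h r / k) := by
    ext y
    constructor
    · rintro ⟨x, hx, rfl⟩
      obtain ⟨s', hs', rfl⟩ := hu.exists_preimage_s15 hk hx
      change g₁ (u s') / k = h r / k
      rw [hgu s' hs', hh _ _ hs']
    · intro hy
      obtain ⟨s', hs', rfl⟩ := hh.exists_preimage_s15 hk hy
      exact ⟨u s', hu _ _ hs', hgu s' hs'⟩
  have hij := hmin.1 _ _ himg
  intro s hs
  refine hmin.2 s ?_
  have : g₁ s ∈ Block k (h r / k) := himg ▸ ⟨s, hs.trans hij.symm, rfl⟩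
  exact this.trans hs.symm

lemma commute_of_fix {k : ℕ} {A : Finset ℕ} {g h : Equiv.Perm ℕ}
    (hg : ∀ r, r / k ∉ A → g r = r) (hh : ∀ r, r / k ∈ A → h r = r) : h * g = g * h := by
  have : Equiv.Perm.Disjoint h g := fun r => by
    by_cases hr : r / k ∈ A
    · exact Or.inl (hh r hr)
    · exact Or.inr (hg r hr)
  exact this.commute

open Classical in
/-- The indices below `m` of the blocks not contained pointwise in `S`; used with `S` a set of fixed
points containing everything from block `m` on. -/
noncomputable def moved (k m : ℕ) (S : Set ℕ) : Finset ℕ :=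
  (range m).filter fun i => ∃ s, s / k = i ∧ s ∉ S

lemma notMem_moved {k m : ℕ} {S : Set ℕ} (hS : ∀ r, k * m ≤ r → r ∈ S) (i : ℕ) :
    i ∉ moved k m S ↔ ∀ s, s / k = i → s ∈ S := by
  classical
  simp only [moved, mem_filter, mem_range, not_and, not_exists, not_not]
  refine ⟨fun h s hs => ?_, fun h _ => h⟩
  by_cases hi : i < m
  · exact h hi s hs
  · exact hS s (((Nat.mul_le_mul_left k (not_lt.mp hi)).trans_eq (by rw [hs])).trans
      (Nat.mul_div_le s k))

lemma moved_subset (k m : ℕ) (S : Set ℕ) : moved k m S ⊆ range m := by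
  classical exact filter_subset _ _

lemma moved_anti (k m : ℕ) {S T : Set ℕ} (h : S ⊆ T) : moved k m T ⊆ moved k m S := by
  classical
  exact monotone_filter_right _ fun i _ ⟨s, hs, hsT⟩ => ⟨s, hs, fun hS => hsT (h hS)⟩

/-- For `n ≥ m`, membership of `h ∈ H_n` in `g₁ H_n g₁⁻¹` does not depend on `n`. -/
lemma exists_conj_iff {k m n : ℕ} (hmn : m ≤ n) {g₁ h : Equiv.Perm ℕ} (hg₁ : InG k m g₁)
    (hh : InH k n h) : (∃ h', InH k n h' ∧ h = g₁ * h' * g₁⁻¹) ↔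
      BlockPreserving k (g₁⁻¹ * h * g₁) := by
  constructor
  · rintro ⟨h', hh', rfl⟩
    have : g₁⁻¹ * (g₁ * h' * g₁⁻¹) * g₁ = h' := by group
    rw [this]
    exact hh'.2
  · intro hu
    have hg := InG.mono hmn hg₁
    exact ⟨g₁⁻¹ * h * g₁, ⟨InG.mul_s15 (InG.mul_s15 (InG.inv hg) hh.1) hg, hu⟩, by group⟩

end CentralizerIndex

open CentralizerIndex

/-- Fix `k ≥ 2` and `m ∈ ℕ`, and let `g₁, g₂ ∈ G_m` with `g₁` and
`g₁ * g₂` minimal representatives. There is a polynomial `P ∈ ℚ[X]` such that for all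
`n ≥ m`, `|C_{H_n}(g₁g₂)| = P(n) * |C_{H_n}(g₁g₂) ∩ g₁·H_n·g₁⁻¹|`. -/
theorem centralizer_index_polynomial (k m : ℕ) (hk : 2 ≤ k)
    (g₁ g₂ : Equiv.Perm ℕ) (hg₁ : InG k m g₁) (hg₂ : InG k m g₂)
    (hmin₁ : MinimalRep k g₁) (hmin₁₂ : MinimalRep k (g₁ * g₂)) :
    ∃ P : Polynomial ℚ, ∀ n : ℕ, m ≤ n →
      (Nat.card {h : Equiv.Perm ℕ | InH k n h ∧
          h * (g₁ * g₂) = (g₁ * g₂) * h} : ℚ) =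
        P.eval (n : ℚ) *
          (Nat.card {h : Equiv.Perm ℕ | InH k n h ∧
            h * (g₁ * g₂) = (g₁ * g₂) * h ∧
            ∃ h' : Equiv.Perm ℕ, InH k n h' ∧ h = g₁ * h' * g₁⁻¹} : ℚ) := by
  have hk0 : 0 < k := by omega
  set g := g₁ * g₂ with hg_def
  have hg : InG k m g := InG.mul_s15 hg₁ hg₂
  set S : Set ℕ := {s | g s = s} with hS_def
  set T : Set ℕ := {s | g s = s ∧ g₁ s = s} with hT_def
  have hS := notMem_moved (k := k) (S := S) hg
  have hT := notMem_moved (k := k) (S := T) fun r hr => ⟨hg r hr, hg₁ r hr⟩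
  let x : ℕ → ℕ := fun n => Nat.card {h : Equiv.Perm ℕ | InH k n h ∧ h * g = g * h}
  let y : ℕ → ℕ := fun n => Nat.card {h : Equiv.Perm ℕ | InH k n h ∧
    (h * g = g * h ∧ BlockPreserving k (g₁⁻¹ * h * g₁))}
  have hcomm : ∀ a b : Equiv.Perm ℕ, a * g = g * a → b * g = g * b → (a * b) * g = g * (a * b) :=
    fun a b ha hb => Commute.mul_left ha hb
  have hx : ∀ n, m ≤ n →
      x (n + 1) = (n + 1 - (moved k m S).card) * k.factorial * x n := fun n hn =>
    card_succ hk0 (fun h => h * g = g * h) (moved k m S)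
      ((moved_subset _ _ _).trans (Finset.range_subset_range.mpr hn)) hcomm
      (fun h r hh hQ hr => by
        rw [hS] at hr ⊢
        exact stable_of_commute hk0 hh hQ hr)
      (fun h _ hfix => commute_of_fix (fun r hr => (hS _).mp hr r rfl) hfix)
  have hy : ∀ n, m ≤ n →
      y (n + 1) = (n + 1 - (moved k m T).card) * k.factorial * y n := fun n hn =>
    card_succ hk0 (fun h => h * g = g * h ∧ BlockPreserving k (g₁⁻¹ * h * g₁)) (moved k m T)
      ((moved_subset _ _ _).trans (Finset.range_subset_range.mpr hn))
      (fun a b ha hb => ⟨hcomm a b ha.1 hb.1, by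
        have := BlockPreserving.mul_s15 ha.2 hb.2
        have he : g₁⁻¹ * (a * b) * g₁ = g₁⁻¹ * a * g₁ * (g₁⁻¹ * b * g₁) := by group
        rwa [he]⟩)
      (fun h r hh hQ hr => by
        rw [hT] at hr ⊢
        exact fun s hs => ⟨stable_of_commute hk0 hh hQ.1 (fun s hs => (hr s hs).1) s hs,
          stable_of_conj hk0 hmin₁ hh hQ.2 (fun s hs => (hr s hs).2) s hs⟩)
      (fun h hh hfix => ⟨commute_of_fix (fun r hr => ((hT _).mp hr r rfl).1) hfix, by
        rw [mul_assoc, commute_of_fix (fun r hr => ((hT _).mp hr r rfl).2) hfix,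
          inv_mul_cancel_left]
        exact hh⟩)
  have hym : y m ≠ 0 := by
    have := finite_inG k m
    have hfin : Finite {h : Equiv.Perm ℕ | InH k m h ∧
        (h * g = g * h ∧ BlockPreserving k (g₁⁻¹ * h * g₁))} :=
      Finite.Set.subset {h : Equiv.Perm ℕ | InG k m h} fun h hh => hh.1.1
    have hne : Nonempty {h : Equiv.Perm ℕ | InH k m h ∧
        (h * g = g * h ∧ BlockPreserving k (g₁⁻¹ * h * g₁))} :=
      ⟨⟨1, ⟨fun _ _ => rfl, fun _ _ h => h⟩, by simp, by
        rw [mul_one, inv_mul_cancel]; exact fun _ _ h => h⟩⟩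
    exact Nat.card_pos.ne'
  obtain ⟨P, hP⟩ := polynomial_of_recurrence
    (Finset.card_le_card (moved_anti k m (fun s hs => hs.1 : T ⊆ S)))
    ((Finset.card_le_card (moved_subset k m T)).trans_eq (Finset.card_range m)) x y hx hy hym
  refine ⟨P, fun n hn => ?_⟩
  have hset : {h : Equiv.Perm ℕ | InH k n h ∧ h * g = g * h ∧
      ∃ h' : Equiv.Perm ℕ, InH k n h' ∧ h = g₁ * h' * g₁⁻¹} =
      {h : Equiv.Perm ℕ | InH k n h ∧ (h * g = g * h ∧ BlockPreserving k (g₁⁻¹ * h * g₁))} := by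
    ext h
    exact and_congr_right fun hh => and_congr_right fun _ => exists_conj_iff hn hg₁ hh
  rw [hset]
  exact hP n hn
end

section
/- Fix k ≥ 2 and m ∈ ℕ, and let g₁, g₂ ∈ G_m be such that both g₁ and g₁·g₂ are minimal representatives. If moreover [g₁]_H ⊆ [g₁g₂]_H, then there exists a natural number c such that for every n ≥ m, the cardinality of the centralizer C_{H_n}(g₁g₂) equals c times the cardinality of C_{H_n}(g₁g₂) ∩ g₁·H_n·g₁⁻¹; i.e. the quotient |C_{H_n}(g₁g₂)| / |C_{H_n}(g₁g₂) ∩ g₁H_ng₁⁻¹| is independent of n. -/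
namespace CentralizerIndex

open Equiv

lemma block_finite {k : ℕ} (hk : 0 < k) (i : ℕ) : (Block k i).Finite := by
  refine (Set.finite_Iio (k * (i + 1))).subset fun r hr => ?_
  have hr' : r / k = i := hr
  have : r < (i + 1) * k := (Nat.div_lt_iff_lt_mul hk).1 (by omega)
  rwa [Set.mem_Iio, mul_comm]

lemma block_ncard {k : ℕ} (hk : 0 < k) (i : ℕ) : (Block k i).ncard = k := by
  have : Block k i = (Finset.Ico (k * i) (k * i + k) : Set ℕ) := by
    ext r
    simp only [Block, Set.mem_ofPred_eq, Finset.coe_Ico, Set.mem_Ico]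
    rw [Nat.div_eq_iff hk, mul_comm i k]
    omega
  rw [this, Set.ncard_coe_finset]
  simp

/-- A block-preserving permutation maps each block onto a block, since all blocks have the same
finite cardinality. -/
lemma image_block {k : ℕ} (hk : 0 < k) {h : Perm ℕ} (hh : BlockPreserving k h) (r : ℕ) :
    h '' Block k (r / k) = Block k (h r / k) := by
  refine Set.eq_of_subset_of_ncard_le ?_ ?_ (block_finite hk _)
  · rintro _ ⟨s, hs, rfl⟩
    exact hh s r hs
  · rw [Set.ncard_image_of_injective _ h.injective, block_ncard hk, block_ncard hk]

/-- The block-preserving permutations of `ℕ`, as a subgroup. -/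
def blockGroup (k : ℕ) (hk : 0 < k) : Subgroup (Perm ℕ) where
  carrier := {h | BlockPreserving k h}
  one_mem' := fun _ _ e => e
  mul_mem' := fun ha hb r s e => ha _ _ (hb r s e)
  inv_mem' := by
    intro h hh r s e
    have hs : s ∈ h '' Block k (h⁻¹ r / k) := by
      rw [image_block hk hh]
      simpa [Block] using e.symm
    obtain ⟨t, ht, rfl⟩ := hs
    simpa [Block] using Eq.symm ht

/-- The centralizer of `x` in `H_n`, as a subgroup of the permutations of `ℕ`. -/
def centH (k : ℕ) (hk : 0 < k) (n : ℕ) (x : Perm ℕ) : Subgroup (Perm ℕ) where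
  carrier := {h | InH k n h ∧ h * x = x * h}
  one_mem' := ⟨⟨fun _ _ => rfl, (blockGroup k hk).one_mem⟩, by simp⟩
  mul_mem' := by
    rintro a b ⟨⟨ha, ha'⟩, hax⟩ ⟨⟨hb, hb'⟩, hbx⟩
    refine ⟨⟨fun r hr => ?_, (blockGroup k hk).mul_mem ha' hb'⟩,
      (Commute.mul_left (show Commute a x from hax) hbx).eq⟩
    rw [Perm.mul_apply, hb r hr, ha r hr]
  inv_mem' := by
    rintro a ⟨⟨ha, ha'⟩, hax⟩
    refine ⟨⟨fun r hr => ?_, (blockGroup k hk).inv_mem ha'⟩,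
      (Commute.inv_left (show Commute a x from hax)).eq⟩
    rw [Perm.inv_eq_iff_eq, ha r hr]

/-- The conjugate `g * B * g⁻¹` of the group `B` of block-preserving permutations. -/
def conjGroup (k : ℕ) (hk : 0 < k) (g : Perm ℕ) : Subgroup (Perm ℕ) :=
  (blockGroup k hk).map (MulAut.conj g).toMonoidHom

lemma mem_conjGroup {k : ℕ} (hk : 0 < k) (g h : Perm ℕ) :
    h ∈ conjGroup k hk g ↔ ∃ b, BlockPreserving k b ∧ h = g * b * g⁻¹ := by
  simp only [conjGroup, Subgroup.mem_map]
  exact exists_congr fun b => and_congr Iff.rfl eq_comm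

/-- A minimal representative fixes every point outside its `H`-support. -/
lemma MinimalRep.fix {k : ℕ} {x : Perm ℕ} (hx : MinimalRep k x) {r : ℕ}
    (hr : r ∉ HSupport k x) : x r = r := by
  simp only [HSupport, Set.mem_ofPred_eq, not_forall, not_not] at hr
  obtain ⟨j, hj⟩ := hr
  obtain rfl := hx.1 _ _ hj
  have : x r ∈ Block k (r / k) := hj ▸ Set.mem_image_of_mem x rfl
  exact hx.2 r this

lemma mem_hSupport_apply {k : ℕ} {x : Perm ℕ} (hx : MinimalRep k x) (r : ℕ) :
    x r ∈ HSupport k x ↔ r ∈ HSupport k x := by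
  constructor
  · intro h
    by_contra hr
    rw [MinimalRep.fix hx hr] at h
    exact hr h
  · intro h
    by_contra hr
    have := x.injective (MinimalRep.fix hx hr)
    exact hr (this.symm ▸ h)

lemma hSupport_lt {k m : ℕ} (hk : 0 < k) {x : Perm ℕ} (hx : InG k m x) {r : ℕ}
    (hr : r ∈ HSupport k x) : r < k * m := by
  by_contra! hle
  refine hr (r / k) ?_
  have hfix : Set.EqOn x id (Block k (r / k)) := fun s hs => by
    have hs' : s / k = r / k := hs
    refine hx s ?_
    rw [mul_comm, ← Nat.le_div_iff_mul_le hk, hs', Nat.le_div_iff_mul_le hk, mul_comm]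
    exact hle
  rw [hfix.image_eq, Set.image_id]

lemma hSupport_congr {k : ℕ} (x : Perm ℕ) {r s : ℕ} (e : r / k = s / k) :
    r ∈ HSupport k x ↔ s ∈ HSupport k x := by
  simp only [HSupport, Set.mem_ofPred_eq, e]

lemma mem_of_centralizes {k : ℕ} (hk : 0 < k) {x h : Perm ℕ} (hh : BlockPreserving k h)
    (hc : h * x = x * h) {r : ℕ} (hr : h r ∈ HSupport k x) : r ∈ HSupport k x := by
  intro j hj
  refine hr (h (j * k) / k) ?_
  have hjj : Block k j = Block k (j * k / k) := by rw [Nat.mul_div_cancel _ hk]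
  rw [← image_block hk hh, ← image_block hk hh, ← hjj, ← hj, ← Set.image_comp, ← Set.image_comp,
    ← Perm.coe_mul, ← Perm.coe_mul, hc]

/-- The `H`-support of `x` is invariant under block-preserving permutations commuting with `x`. -/
lemma mem_hSupport_iff {k : ℕ} (hk : 0 < k) {x h : Perm ℕ} (hh : BlockPreserving k h)
    (hc : h * x = x * h) (r : ℕ) : h r ∈ HSupport k x ↔ r ∈ HSupport k x := by
  refine ⟨mem_of_centralizes hk hh hc, fun hr => ?_⟩
  refine mem_of_centralizes hk ((blockGroup k hk).inv_mem hh)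
    (Commute.inv_left (show Commute h x from hc)).eq ?_
  simpa using hr

/-- The part `a` of `h` acting on the `H`-support of `x` centralizes `x` and lies in `H_m`, while
the remaining part `a⁻¹ * h` fixes this support pointwise, hence commutes with every `g`
supported on it. -/
lemma exists_factor {k m n : ℕ} (hk : 0 < k) {x g h : Perm ℕ} (hxm : InG k m x)
    (hx : MinimalRep k x) (hg : MinimalRep k g) (hsub : HSupport k g ⊆ HSupport k x)
    (hh : h ∈ centH k hk n x) :
    ∃ a ∈ centH k hk m x, a⁻¹ * h ∈ conjGroup k hk g := by
  classical
  obtain ⟨⟨-, hb⟩, hc⟩ := hh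
  have hS := mem_hSupport_iff hk hb hc
  let a : Perm ℕ := Perm.ofSubtype (h.subtypePerm (p := (· ∈ HSupport k x)) hS)
  have ha_in : ∀ r ∈ HSupport k x, a r = h r := fun r hr => by
    simp only [a]
    rw [Perm.ofSubtype_apply_of_mem _ hr]
    rfl
  have ha_out : ∀ r ∉ HSupport k x, a r = r := fun r hr =>
    Perm.ofSubtype_apply_of_not_mem _ hr
  have hab : BlockPreserving k a := by
    intro r s e
    by_cases hr : r ∈ HSupport k x
    · rw [ha_in r hr, ha_in s ((hSupport_congr x e).1 hr)]
      exact hb r s e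
    · rw [ha_out r hr, ha_out s (fun hs => hr ((hSupport_congr x e).2 hs))]
      exact e
  refine ⟨a, ⟨⟨fun r hr => ha_out r fun hr' => ?_, hab⟩, ?_⟩, ?_⟩
  · exact absurd (hSupport_lt hk hxm hr') (not_lt.2 hr)
  · ext r
    simp only [Perm.mul_apply]
    by_cases hr : r ∈ HSupport k x
    · rw [ha_in r hr, ha_in _ ((mem_hSupport_apply hx r).2 hr)]
      exact DFunLike.congr_fun hc r
    · rw [MinimalRep.fix hx hr, ha_out r hr, MinimalRep.fix hx hr]
  · have hdisj : Perm.Disjoint g (a⁻¹ * h) := fun r => by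
      by_cases hr : r ∈ HSupport k x
      · right
        rw [Perm.mul_apply, Perm.inv_eq_iff_eq, ha_in r hr]
      · exact Or.inl (MinimalRep.fix hg fun hr' => hr (hsub hr'))
    refine (mem_conjGroup hk g _).2 ⟨a⁻¹ * h, ?_, ?_⟩
    · exact (blockGroup k hk).mul_mem ((blockGroup k hk).inv_mem hab) hb
    · rw [hdisj.commute.eq, mul_inv_cancel_right]

/-- If `A ≤ C` and `C = A * (C ∩ K)`, then the inclusion induces a bijection from the cosets of
`A ∩ K` in `A` to those of `C ∩ K` in `C`. -/
lemma relIndex_eq_of_factor {G : Type*} [Group G] {A C K : Subgroup G} (hAC : A ≤ C)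
    (hfac : ∀ h ∈ C, ∃ a ∈ A, a⁻¹ * h ∈ K) : K.relIndex C = K.relIndex A := by
  refine (Nat.card_congr (Equiv.ofBijective
    (Subgroup.quotientSubgroupOfEmbeddingOfLE K hAC) ⟨?_, ?_⟩)).symm
  · exact (Subgroup.quotientSubgroupOfEmbeddingOfLE K hAC).injective
  · rintro ⟨h⟩
    obtain ⟨a, ha, hk⟩ := hfac h h.2
    exact ⟨QuotientGroup.mk ⟨a, ha⟩, QuotientGroup.eq.2 hk⟩

end CentralizerIndex

open CentralizerIndex

/-- Fix `k ≥ 2` and `m ∈ ℕ`, and let `g₁, g₂ ∈ G_m` with `g₁` and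
`g₁ * g₂` minimal representatives. If `[g₁]_H ⊆ [g₁g₂]_H`, then there is a natural
number `c` with `|C_{H_n}(g₁g₂)| = c * |C_{H_n}(g₁g₂) ∩ g₁·H_n·g₁⁻¹|` for all
`n ≥ m`: the quotient is independent of `n`. -/
theorem centralizer_index_constant (k m : ℕ) (hk : 2 ≤ k)
    (g₁ g₂ : Equiv.Perm ℕ) (hg₁ : InG k m g₁) (hg₂ : InG k m g₂)
    (hmin₁ : MinimalRep k g₁) (hmin₁₂ : MinimalRep k (g₁ * g₂))
    (hsub : HSupport k g₁ ⊆ HSupport k (g₁ * g₂)) :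
    ∃ c : ℕ, ∀ n : ℕ, m ≤ n →
      Nat.card {h : Equiv.Perm ℕ | InH k n h ∧
          h * (g₁ * g₂) = (g₁ * g₂) * h} =
        c * Nat.card {h : Equiv.Perm ℕ | InH k n h ∧
            h * (g₁ * g₂) = (g₁ * g₂) * h ∧
            ∃ h' : Equiv.Perm ℕ, InH k n h' ∧ h = g₁ * h' * g₁⁻¹} := by
  have hk0 : 0 < k := by omega
  have hxm : InG k m (g₁ * g₂) := fun r hr => by
    rw [Equiv.Perm.mul_apply, hg₂ r hr, hg₁ r hr]
  refine ⟨(conjGroup k hk0 g₁).relIndex (centH k hk0 m (g₁ * g₂)), fun n hn => ?_⟩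
  have hle : centH k hk0 m (g₁ * g₂) ≤ centH k hk0 n (g₁ * g₂) := fun h hh =>
    ⟨⟨fun r hr => hh.1.1 r ((Nat.mul_le_mul_left k hn).trans hr), hh.1.2⟩, hh.2⟩
  rw [← relIndex_eq_of_factor hle fun h hh =>
    exists_factor hk0 hxm hmin₁₂ hmin₁ hsub hh]
  have hset : {h : Equiv.Perm ℕ | InH k n h ∧ h * (g₁ * g₂) = (g₁ * g₂) * h ∧
      ∃ h' : Equiv.Perm ℕ, InH k n h' ∧ h = g₁ * h' * g₁⁻¹} =
      ((conjGroup k hk0 g₁ ⊓ centH k hk0 n (g₁ * g₂) : Subgroup (Equiv.Perm ℕ)) :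
        Set (Equiv.Perm ℕ)) := by
    ext h
    rw [SetLike.mem_coe, Subgroup.mem_inf, mem_conjGroup]
    constructor
    · rintro ⟨hH, hc, h', hh', e⟩
      exact ⟨⟨h', hh'.2, e⟩, hH, hc⟩
    · rintro ⟨⟨b, hb, e⟩, hH, hc⟩
      refine ⟨hH, hc, b, ⟨fun r hr => ?_, hb⟩, e⟩
      -- `g₁` and `h` fix `r`, hence so does `b = g₁⁻¹ * h * g₁`.
      have hgr : g₁ r = r := hg₁ r (le_trans (Nat.mul_le_mul_left k hn) hr)
      have hb' : b = g₁⁻¹ * h * g₁ := by rw [e]; group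
      rw [hb', Equiv.Perm.mul_apply, Equiv.Perm.mul_apply, hgr, hH.1 r hr,
        Equiv.Perm.inv_eq_iff_eq, hgr]
  rw [hset]
  change Nat.card (centH k hk0 n (g₁ * g₂)) = _ * Nat.card
    (conjGroup k hk0 g₁ ⊓ centH k hk0 n (g₁ * g₂) : Subgroup (Equiv.Perm ℕ))
  rw [← Subgroup.inf_relIndex_right, mul_comm, ← Subgroup.relIndex_bot_left,
    ← Subgroup.relIndex_bot_left, Subgroup.relIndex_mul_relIndex _ _ _ bot_le inf_le_right]
end

section
/- Fix k ≥ 2. Let g₁, g₂ be permutations of ℕ with finite support and let g be a permutation of ℕ with finite support that is a minimal representative. Consider the set V of pairs (a,b) with a ∈ H_∞·g₁·H_∞, b ∈ H_∞·g₂·H_∞, and a·b = h·g·h⁻¹ for some h ∈ H_∞. Then V is a union of finitely many orbits of the reverted action of H_∞×H_∞; that is, there is a finite subset F of V such that every (a,b) ∈ V satisfies (a,b) = (h₁·a₀·h₂⁻¹, h₂·b₀·h₁⁻¹) for some (a₀,b₀) ∈ F and h₁, h₂ ∈ H_∞. -/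
/-- Membership in `H_∞`: finitely supported block-preserving permutations of `ℕ`. -/
def InHinf (k : ℕ) (h : Equiv.Perm ℕ) : Prop :=
  BlockPreserving k h ∧ {r : ℕ | h r ≠ r}.Finite

theorem InHinf.one (k : ℕ) : InHinf k 1 :=
  ⟨fun _ _ h => h, by simp⟩

theorem InHinf.mul {k : ℕ} {a b : Equiv.Perm ℕ} (ha : InHinf k a) (hb : InHinf k b) :
    InHinf k (a * b) := by
  refine ⟨fun r s h => ha.1 _ _ (hb.1 _ _ h), (ha.2.union hb.2).subset fun r hr => ?_⟩
  by_contra hc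
  simp only [Set.mem_union, Set.mem_ofPred_eq, not_or, not_not] at hc
  exact hr (by simp [hc.1, hc.2])

/-- The blocks are finite of the same size, so a block-preserving permutation maps every block
onto a block; hence its inverse is block-preserving too. -/
theorem BlockPreserving.inv_s18 {k : ℕ} (hk : 0 < k) {a : Equiv.Perm ℕ} (ha : BlockPreserving k a) :
    BlockPreserving k a⁻¹ := by
  have mem : ∀ i r : ℕ, r ∈ Finset.Ico (i * k) ((i + 1) * k) ↔ r / k = i := fun i r => by
    rw [Finset.mem_Ico, Nat.div_eq_iff hk]
    have : (i + 1) * k = i * k + k := by ring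
    omega
  intro r s hrs
  have key : (Finset.Ico ((a⁻¹ r) / k * k) (((a⁻¹ r) / k + 1) * k)).image a
      = Finset.Ico (r / k * k) ((r / k + 1) * k) := by
    apply Finset.eq_of_subset_of_card_le
    · intro x hx
      obtain ⟨y, hy, rfl⟩ := Finset.mem_image.1 hx
      rw [mem] at hy ⊢
      simpa using ha _ _ hy
    · rw [Finset.card_image_of_injective _ a.injective]
      simp [add_mul]
  have hs : s ∈ Finset.Ico (r / k * k) ((r / k + 1) * k) := (mem _ _).2 hrs.symm
  rw [← key] at hs
  obtain ⟨y, hy, rfl⟩ := Finset.mem_image.1 hs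
  rw [mem] at hy
  simpa using hy.symm

theorem InHinf.inv_s18 {k : ℕ} (hk : 0 < k) {a : Equiv.Perm ℕ} (ha : InHinf k a) :
    InHinf k a⁻¹ := by
  refine ⟨ha.1.inv_s18 hk, ha.2.subset fun r hr hc => hr ?_⟩
  exact Equiv.Perm.inv_eq_iff_eq.2 hc.symm

/-- The permutation of `ℕ` which permutes the blocks according to `σ` and keeps the position
`r % k` inside a block. -/
def blockLift (k : ℕ) (hk : 0 < k) (σ : Equiv.Perm ℕ) : Equiv.Perm ℕ where
  toFun r := k * σ (r / k) + r % k
  invFun r := k * σ⁻¹ (r / k) + r % k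
  left_inv r := by
    simp [Nat.mul_add_div hk, Nat.mod_div_self, Nat.div_add_mod]
  right_inv r := by
    simp [Nat.mul_add_div hk, Nat.mod_div_self, Nat.div_add_mod]

theorem blockLift_apply (k : ℕ) (hk : 0 < k) (σ : Equiv.Perm ℕ) (r : ℕ) :
    blockLift k hk σ r = k * σ (r / k) + r % k := rfl

theorem blockLift_apply_of_fixed (k : ℕ) (hk : 0 < k) (σ : Equiv.Perm ℕ) {r : ℕ}
    (h : σ (r / k) = r / k) : blockLift k hk σ r = r := by
  rw [blockLift_apply, h, Nat.div_add_mod]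

theorem blockLift_inHinf (k : ℕ) (hk : 0 < k) (σ : Equiv.Perm ℕ)
    (hσ : {i : ℕ | σ i ≠ i}.Finite) : InHinf k (blockLift k hk σ) := by
  refine ⟨fun r s h => ?_, ?_⟩
  · simp [blockLift_apply, Nat.mul_add_div hk, h, Nat.mod_div_self]
  · obtain ⟨N, hN⟩ := hσ.bddAbove
    refine (Set.finite_Iio ((N + 1) * k)).subset fun r hr => ?_
    have h1 : σ (r / k) ≠ r / k := fun h => hr (blockLift_apply_of_fixed k hk σ h)
    exact (Nat.div_lt_iff_lt_mul hk).1 (Nat.lt_succ_of_le (hN h1))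

/-- A finite set `T` can be moved below `n + |T|` by a finitely supported permutation
fixing `[0, n)` pointwise. -/
theorem exists_perm_lt (n : ℕ) (T : Finset ℕ) :
    ∃ σ : Equiv.Perm ℕ, {i : ℕ | σ i ≠ i}.Finite ∧ (∀ i < n, σ i = i) ∧
      ∀ t ∈ T, σ t < n + T.card := by
  induction T using Finset.induction_on with
  | empty => exact ⟨1, by simp, by simp, by simp⟩
  | insert t T ht ih =>
    obtain ⟨σ, hfin, hfix, hlt⟩ := ih
    rw [Finset.card_insert_of_notMem ht]
    by_cases hc : σ t < n + T.card
    · refine ⟨σ, hfin, hfix, fun s hs => ?_⟩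
      rcases Finset.mem_insert.1 hs with rfl | hs
      · omega
      · have := hlt s hs
        omega
    · -- `σ t` is swapped into the first free place; the smaller values are not disturbed.
      have hsw : ∀ x < n + T.card, Equiv.swap (σ t) (n + T.card) x = x := fun x hx =>
        Equiv.swap_apply_of_ne_of_ne (by omega) (by omega)
      refine ⟨Equiv.swap (σ t) (n + T.card) * σ, ?_, fun i hi => ?_, fun s hs => ?_⟩
      · refine (hfin.union (Set.toFinite {σ t, n + T.card})).subset fun i hi => ?_
        by_contra hcon
        simp only [Set.mem_union, Set.mem_ofPred_eq, not_or, not_not, Set.mem_insert_iff,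
          Set.mem_singleton_iff] at hcon
        refine hi ?_
        rw [Equiv.Perm.mul_apply, hcon.1]
        exact Equiv.swap_apply_of_ne_of_ne hcon.2.1 hcon.2.2
      · rw [Equiv.Perm.mul_apply, hfix i hi]
        exact hsw i (by omega)
      · rw [Equiv.Perm.mul_apply]
        rcases Finset.mem_insert.1 hs with rfl | hs
        · rw [Equiv.swap_apply_left]
          omega
        · have := hlt s hs
          rw [hsw _ this]
          omega

/-- The supports of `a` and `b` lie on opposite sides of `N`, hence are disjoint. -/
theorem commute_of_fixed {N : ℕ} {a b : Equiv.Perm ℕ} (ha : ∀ r < N, a r = r)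
    (hb : ∀ r, N ≤ r → b r = r) : a * b = b * a :=
  Equiv.Perm.Disjoint.commute fun r => (lt_or_ge r N).imp (ha r) (hb r)

/-- Fix `k ≥ 2`. Let `g₁, g₂` be finitely supported permutations of
`ℕ` and `g` a finitely supported minimal representative. The set `V` of pairs
`(a,b)` with `a ∈ H_∞·g₁·H_∞`, `b ∈ H_∞·g₂·H_∞` and `a * b ∈ g^{H_∞}` is a union
of finitely many orbits of the reverted action of `H_∞ × H_∞`. -/
theorem fiber_finitely_many_reverted_orbits (k : ℕ) (hk : 2 ≤ k)
    (g₁ g₂ g : Equiv.Perm ℕ)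
    (hg₁ : {r : ℕ | g₁ r ≠ r}.Finite) (hg₂ : {r : ℕ | g₂ r ≠ r}.Finite)
    (hg : {r : ℕ | g r ≠ r}.Finite) (hmin : MinimalRep k g) :
    ∃ F : Finset (Equiv.Perm ℕ × Equiv.Perm ℕ),
      (↑F ⊆ {ab : Equiv.Perm ℕ × Equiv.Perm ℕ |
        (∃ h₁ h₂ : Equiv.Perm ℕ, InHinf k h₁ ∧ InHinf k h₂ ∧ ab.1 = h₁ * g₁ * h₂) ∧
        (∃ h₁ h₂ : Equiv.Perm ℕ, InHinf k h₁ ∧ InHinf k h₂ ∧ ab.2 = h₁ * g₂ * h₂) ∧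
        (∃ h : Equiv.Perm ℕ, InHinf k h ∧ ab.1 * ab.2 = h * g * h⁻¹)}) ∧
      ∀ ab : Equiv.Perm ℕ × Equiv.Perm ℕ,
        ((∃ h₁ h₂ : Equiv.Perm ℕ, InHinf k h₁ ∧ InHinf k h₂ ∧ ab.1 = h₁ * g₁ * h₂) ∧
         (∃ h₁ h₂ : Equiv.Perm ℕ, InHinf k h₁ ∧ InHinf k h₂ ∧ ab.2 = h₁ * g₂ * h₂) ∧
         (∃ h : Equiv.Perm ℕ, InHinf k h ∧ ab.1 * ab.2 = h * g * h⁻¹)) →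
        ∃ ab₀ ∈ F, ∃ h₁ h₂ : Equiv.Perm ℕ, InHinf k h₁ ∧ InHinf k h₂ ∧
          ab.1 = h₁ * ab₀.1 * h₂⁻¹ ∧ ab.2 = h₂ * ab₀.2 * h₁⁻¹ := by
  classical
  have hk0 : 0 < k := by omega
  obtain ⟨n, hn₁, hn⟩ : ∃ n : ℕ, (∀ r, k * n ≤ r → g₁ r = r) ∧ ∀ r, k * n ≤ r → g r = r := by
    obtain ⟨N, hN⟩ := (hg₁.union hg).bddAbove
    refine ⟨N + 1, fun r hr => ?_, fun r hr => ?_⟩ <;>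
    · by_contra hc
      have h1 : r ≤ N := hN (by simp [hc])
      nlinarith
  let V : Set (Equiv.Perm ℕ × Equiv.Perm ℕ) := {ab |
        (∃ h₁ h₂ : Equiv.Perm ℕ, InHinf k h₁ ∧ InHinf k h₂ ∧ ab.1 = h₁ * g₁ * h₂) ∧
        (∃ h₁ h₂ : Equiv.Perm ℕ, InHinf k h₁ ∧ InHinf k h₂ ∧ ab.2 = h₁ * g₂ * h₂) ∧
        (∃ h : Equiv.Perm ℕ, InHinf k h ∧ ab.1 * ab.2 = h * g * h⁻¹)}
  let pr : Equiv.Perm ℕ → Equiv.Perm ℕ × Equiv.Perm ℕ := fun w => (w * g₁, (w * g₁)⁻¹ * g)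
  let res : Equiv.Perm ℕ → (Fin (k * n) → ℕ) := fun w i => w i
  let S : Set (Equiv.Perm ℕ) :=
    {w | InHinf k w ∧ pr w ∈ V ∧ ∀ r < k * n, w r < k * (n + k * n)}
  have hfin : (res '' S).Finite := by
    refine (Set.finite_Icc (0 : Fin (k * n) → ℕ) (fun _ => k * (n + k * n))).subset ?_
    rintro _ ⟨w, hw, rfl⟩
    exact ⟨fun i => Nat.zero_le _, fun i => (hw.2.2 i i.2).le⟩
  -- One representative in `S` for each restriction to `[0, k * n)`.
  obtain ⟨W, hWS, hW⟩ : ∃ W : Finset (Equiv.Perm ℕ), ↑W ⊆ S ∧ W.image res = hfin.toFinset :=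
    Finset.subset_set_image_iff.1 (by simp)
  refine ⟨W.image pr, ?_, ?_⟩
  · intro ab hab
    obtain ⟨w, hw, rfl⟩ := Finset.mem_image.1 (Finset.mem_coe.1 hab)
    exact (hWS hw).2.1
  rintro ⟨a, b⟩ ⟨⟨u, v, hu, hv, ha⟩, ⟨x, y, hx, hy, hb⟩, ⟨h, hh, hab⟩⟩
  simp only at ha hb hab
  have hb' : b = a⁻¹ * (h * g * h⁻¹) := by rw [← hab]; group
  -- `t * (h⁻¹ * u)` is the left multiple of `w = h⁻¹ * u` mapping `[0, k * n)` below `k * M`.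
  obtain ⟨σ, hσfin, hσfix, hσlt⟩ :=
    exists_perm_lt n ((Finset.range (k * n)).image fun r => (h⁻¹ * u) r / k)
  obtain ⟨t, ht⟩ : ∃ t, t = blockLift k hk0 σ := ⟨_, rfl⟩
  have htH : InHinf k t := ht ▸ blockLift_inHinf k hk0 σ hσfin
  have htg : t * g = g * t := by
    refine commute_of_fixed (fun r hr => ?_) hn
    rw [ht]
    exact blockLift_apply_of_fixed k hk0 σ (hσfix _ (Nat.div_lt_of_lt_mul hr))
  have hw₁H : InHinf k (t * h⁻¹ * u) := (htH.mul (hh.inv_s18 hk0)).mul hu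
  have hw₁S : t * h⁻¹ * u ∈ S := by
    refine ⟨hw₁H, ⟨⟨_, 1, hw₁H, InHinf.one k, (mul_one _).symm⟩,
      ⟨v * x, y * h * t⁻¹, hv.mul hx, (hy.mul hh).mul (htH.inv_s18 hk0), ?_⟩,
      ⟨1, InHinf.one k, by simp only [pr]; group⟩⟩, fun r hr => ?_⟩
    · have e : v * x * g₂ * (y * h * t⁻¹) = v * b * h * t⁻¹ := by rw [hb]; group
      have e' : t⁻¹ * g = g * t⁻¹ := by
        rw [inv_mul_eq_iff_eq_mul, ← mul_assoc, htg]; group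
      rw [e, hb', ha]
      simp only [pr, mul_inv_rev, inv_inv, mul_assoc, e']
      group
    · have h1 := hσlt _ (Finset.mem_image_of_mem _ (Finset.mem_range.2 hr))
      have h2 : ((Finset.range (k * n)).image fun r => (h⁻¹ * u) r / k).card ≤ k * n :=
        Finset.card_image_le.trans (by simp)
      have h3 : σ ((h⁻¹ * u) r / k) + 1 ≤ n + k * n := by omega
      have h4 := Nat.mod_lt ((h⁻¹ * u) r) hk0
      rw [mul_assoc, Equiv.Perm.mul_apply, ht, blockLift_apply]
      calc _ < k * (σ ((h⁻¹ * u) r / k) + 1) := by rw [mul_add, mul_one]; omega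
        _ ≤ _ := Nat.mul_le_mul_left _ h3
  obtain ⟨w, hwW, hw⟩ : ∃ w ∈ W, res w = res (t * h⁻¹ * u) := by
    rw [← Finset.mem_image, hW, Set.Finite.mem_toFinset]
    exact Set.mem_image_of_mem _ hw₁S
  have hwH : InHinf k w := (hWS hwW).1
  obtain ⟨d, hd⟩ : ∃ d, d = w⁻¹ * (t * h⁻¹ * u) := ⟨_, rfl⟩
  have hdH : InHinf k d := hd ▸ (hwH.inv_s18 hk0).mul hw₁H
  have hdg : d * g₁ = g₁ * d := by
    refine commute_of_fixed (fun r hr => ?_) hn₁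
    rw [hd, Equiv.Perm.mul_apply, Equiv.Perm.inv_eq_iff_eq]
    exact (congrFun hw ⟨r, hr⟩).symm
  have hu' : u = h * t⁻¹ * w * d := by rw [hd]; group
  have ha' : a = h * t⁻¹ * (w * g₁) * (d * v) := by
    rw [ha, hu']
    simp only [mul_assoc]
    rw [← mul_assoc d, hdg, mul_assoc]
  refine ⟨pr w, Finset.mem_image_of_mem _ hwW, h * t⁻¹, (d * v)⁻¹, hh.mul (htH.inv_s18 hk0),
    (hdH.mul hv).inv_s18 hk0, ?_, ?_⟩
  · simpa only [pr, inv_inv] using ha'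
  · have e : t * g * h⁻¹ = g * t * h⁻¹ := by rw [htg]
    calc b = (d * v)⁻¹ * (w * g₁)⁻¹ * (t * g * h⁻¹) := by rw [hb', ha']; group
      _ = _ := by rw [e]; simp only [pr]; group
end
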